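/- arXiv:1707.03639 — 2 statements merged into one kernel-verified Lean document; each statement's English description precedes it below -/
import Mathlib

section
/- Let G ≅ C_m ⋉_φ C_{mn} for positive integers m, n. Then E(G) = |G| + d(G) = m²n + mn + m − 2, and consequently d(G) = mn + m − 2. -/
/-- A sequence (multiset) over `G` is product-one if its terms can be ordered so
that their product equals `1`. -/
def IsProductOne {G : Type*} [Group G] (S : Multiset G) : Prop :=
  ∃ l : List G, (l : Multiset G) = S ∧ l.prod = 1

/-- A sequence is product-one free if it has no nonempty product-one subsequence. -/
def ProductOneFree {G : Type*} [Group G] (S : Multiset G) : Prop :=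
  ∀ T ≤ S, T ≠ 0 → ¬ IsProductOne T

/-!
Write `α`, `β` for the generators, `β * α = α ^ r * β`, and record the exponents of a product
together with its length. If `r ^ t ≡ 1 [MOD p]` and all exponents of `α` and `β` are multiples of
`s` and `t`, then modulo `s * p` the exponents of a product are the sums of those of its terms.
Hence among `4p - 3` terms there are `p` whose product lies one level up, at `(s * p, t * p)`, by
Reiher's theorem (the Kemnitz conjecture), and among `3p - 2` terms there are some whose product
does so and whose number is a positive multiple of `p`, by the Davenport constant of `C_p ^ 3`.

Replace blocks of `p` terms by their products and repeat, with `p` the smallest prime factor of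
what remains of `m`; then `(r ^ t) ^ m ≡ 1 [MOD p]` forces `r ^ t ≡ 1 [MOD p]`. Once `m` is used
up, only the exponent of `α` matters and the Erdős–Ginzburg–Ziv theorem and the Davenport constant
of `C_p ^ 2` take over. Thus `2mn + 2m - 3` terms contain a product-one block of length `mn`. After
removing `m - 1` such blocks, the `2mn + m - 2` remaining terms still contain a product-one
sequence whose length is a positive multiple of `mn`, hence is `mn` or, if `m ≥ 2`, `2mn`.
-/

section SignedCounts

open Finset

variable {p : ℕ} {ι κ A : Type*}

/-- The number of `I ⊆ J` of even size with `∑ i ∈ I, v i = g` minus the number of those of odd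
size, as an element of `ZMod p`. Equivalently, the coefficient of `X ^ g` in the product
`∏ i ∈ J, (1 - X ^ v i)` over `ZMod p`. -/
def signedCount (p : ℕ) [AddCommMonoid A] [DecidableEq A] (v : ι → A) (J : Finset ι) (g : A) :
    ZMod p :=
  ∑ I ∈ J.powerset with ∑ i ∈ I, v i = g, (-1) ^ #I

theorem signedCount_map [AddCommMonoid A] [DecidableEq A] (e : κ ↪ ι) (v : ι → A) (J : Finset κ)
    (g : A) : signedCount p v (J.map e) g = signedCount p (v ∘ e) J g := by
  refine (sum_bij (fun I _ ↦ I.map e) ?_ (fun _ _ _ _ h ↦ map_injective e h) ?_ ?_).symm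
  · simp +contextual
  · intro I hI
    obtain ⟨hIJ, hsum⟩ := mem_filter.1 hI
    obtain ⟨I, hIJ, rfl⟩ := subset_map_iff.1 (mem_powerset.1 hIJ)
    exact ⟨I, by simp_all, rfl⟩
  · simp

theorem signedCount_insert [AddCommGroup A] [DecidableEq A] [DecidableEq ι] (v : ι → A)
    {J : Finset ι} {j : ι} (hj : j ∉ J) (g : A) :
    signedCount p v (insert j J) g = signedCount p v J g - signedCount p v J (g - v j) := by
  simp only [signedCount, sum_filter, sum_powerset_insert hj, sub_eq_add_neg (∑ _ ∈ _, _),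
    ← sum_neg_distrib]
  congr 1
  refine sum_congr rfl fun I hI ↦ ?_
  have hjI : j ∉ I := fun h ↦ hj (mem_powerset.1 hI h)
  simp only [sum_insert hjI, card_insert_of_notMem hjI, pow_succ, eq_sub_iff_add_eq',
    mul_neg_one]
  split_ifs <;> simp

theorem card_filter_support_eq [Fintype ι] [DecidableEq ι] {K : Type*} [Fintype K] [DecidableEq K]
    [Zero K] (I : Finset ι) :
    #{x : ι → K | ({i | x i ≠ 0} : Finset ι) = I} = (Fintype.card K - 1) ^ #I := by
  have h : ({x : ι → K | ({i | x i ≠ 0} : Finset ι) = I} : Finset (ι → K))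
      = Fintype.piFinset fun i ↦ if i ∈ I then univ.erase 0 else {0} := by
    ext x
    simp only [mem_filter, mem_univ, true_and, Fintype.mem_piFinset, Finset.ext_iff]
    exact forall_congr' fun i ↦ by by_cases hi : i ∈ I <;> simp [hi]
  rw [h, Fintype.card_piFinset]
  simp [apply_ite card]

variable [Fact p.Prime] [Fintype κ]

/-- Chevalley–Warning for the polynomials `∑ i, v i k * X i ^ (p - 1)`: a vector `x` is a common
zero if and only if `v` sums to zero over the support of `x`. -/
theorem signedCount_univ_eq_zero [Fintype ι] {v : ι → κ → ZMod p}
    (h : Fintype.card κ * (p - 1) < Fintype.card ι) : signedCount p v univ 0 = 0 := by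
  classical
  have hp : p.Prime := Fact.out
  have hp1 : p - 1 ≠ 0 := (Nat.sub_pos_of_lt hp.one_lt).ne'
  let f (k : κ) : MvPolynomial ι (ZMod p) :=
    ∑ i, MvPolynomial.C (v i k) * MvPolynomial.X i ^ (p - 1)
  let supp (x : ι → ZMod p) : Finset ι := {i | x i ≠ 0}
  have hdeg : ∑ k, (f k).totalDegree < Fintype.card ι := by
    refine (sum_le_sum fun k _ ↦ MvPolynomial.totalDegree_finsetSum_le (d := p - 1)
      fun i _ ↦ (MvPolynomial.totalDegree_mul _ _).trans ?_).trans_lt (by simpa using h)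
    simp
  have heval (x : ι → ZMod p) (k : κ) : (f k).eval x = ∑ i ∈ supp x, v i k := by
    simp only [f, map_sum, map_mul, MvPolynomial.eval_C, map_pow, MvPolynomial.eval_X, supp,
      sum_filter]
    refine sum_congr rfl fun i _ ↦ ?_
    by_cases hi : x i = 0
    · simp [hi, hp1]
    · simp [hi, ZMod.pow_card_sub_one_eq_one]
  have hdvd := char_dvd_card_solutions_of_fintype_sum_lt p hdeg
  simp only [heval, Fintype.card_subtype] at hdvd
  have hcard : #{x | ∀ k, ∑ i ∈ supp x, v i k = 0}
      = ∑ I : Finset ι with ∑ i ∈ I, v i = 0, (p - 1) ^ #I := by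
    have hmaps : Set.MapsTo supp ({x | ∀ k, ∑ i ∈ supp x, v i k = 0} : Finset (ι → ZMod p))
        ({I | ∑ i ∈ I, v i = 0} : Finset (Finset ι)) := by
      simp [Set.MapsTo, funext_iff]
    rw [card_eq_sum_card_fiberwise hmaps]
    refine sum_congr rfl fun I hI ↦ ?_
    rw [filter_filter]
    have := card_filter_support_eq (K := ZMod p) I
    rw [ZMod.card] at this
    rw [← this]
    congr 1
    ext x
    simp only [mem_filter, mem_univ, true_and, funext_iff, Finset.sum_apply, Pi.zero_apply] at hI ⊢
    exact ⟨And.right, fun hx ↦ ⟨by rw [show supp x = I from hx]; exact hI, hx⟩⟩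
  rw [hcard, ← CharP.cast_eq_zero_iff (ZMod p) p] at hdvd
  simpa [signedCount, Nat.cast_sub hp.one_le] using hdvd

theorem signedCount_zero_eq_zero {v : ι → κ → ZMod p} {J : Finset ι}
    (h : Fintype.card κ * (p - 1) < #J) : signedCount p v J 0 = 0 := by
  rw [← attach_map_val (s := J), signedCount_map, ← univ_eq_attach]
  exact signedCount_univ_eq_zero (by simpa using h)

theorem signedCount_eq_signedCount_zero {v : ι → κ → ZMod p} {J : Finset ι}
    (h : Fintype.card κ * (p - 1) ≤ #J) (g : κ → ZMod p) :
    signedCount p v J g = signedCount p v J 0 := by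
  classical
  let v' (o : Option ι) : κ → ZMod p := o.elim (-g) v
  have hnone : none ∉ J.map .some := by simp
  have hzero := signedCount_zero_eq_zero (v := v') (J := insert none (J.map .some))
    (by rw [card_insert_of_notMem hnone, card_map]; omega)
  rw [signedCount_insert v' hnone, signedCount_map, signedCount_map, sub_eq_zero] at hzero
  have hcomp : v' ∘ Function.Embedding.some = v := rfl
  rw [hcomp, show (0 : κ → ZMod p) - v' none = g by simp [v']] at hzero
  exact hzero.symm

/-- The Davenport constant of an elementary abelian `p`-group of rank `k` is at most
`k * (p - 1) + 1`. -/
theorem exists_nonempty_sum_eq_zero {v : ι → κ → ZMod p} {J : Finset ι}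
    (h : Fintype.card κ * (p - 1) < #J) : ∃ I ⊆ J, I.Nonempty ∧ ∑ i ∈ I, v i = 0 := by
  by_contra! hcon
  have hcount := signedCount_zero_eq_zero h (v := v)
  have hempty : ({I ∈ J.powerset | ∑ i ∈ I, v i = 0} : Finset (Finset ι)) = {∅} := by
    ext I
    simp only [mem_filter, mem_powerset, mem_singleton]
    refine ⟨fun hI ↦ not_nonempty_iff_eq_empty.1 fun hne ↦ hcon I hI.1 hne hI.2, ?_⟩
    rintro rfl
    simp
  simp [signedCount, hempty] at hcount

end SignedCounts

section ZeroSumSubsets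

open Finset

variable {p : ℕ} {ι κ A : Type*}

/-- The subsets of `J` of size `s` over which `f` sums to zero. -/
def zeroSumSubsets [AddCommMonoid A] [DecidableEq A] (f : ι → A) (J : Finset ι) (s : ℕ) :
    Finset (Finset ι) :=
  {I ∈ J.powersetCard s | ∑ i ∈ I, f i = 0}

section AddCommMonoid

variable [AddCommMonoid A] [DecidableEq A] {f : ι → A} {I J K : Finset ι} {s : ℕ}

theorem mem_zeroSumSubsets :
    I ∈ zeroSumSubsets f J s ↔ I ⊆ J ∧ #I = s ∧ ∑ i ∈ I, f i = 0 := by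
  rw [zeroSumSubsets, mem_filter, mem_powersetCard, and_assoc]

theorem card_zeroSumSubsets_zero (f : ι → A) (J : Finset ι) : #(zeroSumSubsets f J 0) = 1 := by
  simp [zeroSumSubsets, filter_singleton]

theorem zeroSumSubsets_eq_empty_of_card_lt (h : #J < s) : zeroSumSubsets f J s = ∅ := by
  simp [zeroSumSubsets, powersetCard_eq_empty.2 h]

theorem zeroSumSubsets_eq_empty_mono (h : zeroSumSubsets f K s = ∅) (hJ : J ⊆ K) :
    zeroSumSubsets f J s = ∅ :=
  subset_empty.1 <| h ▸ filter_subset_filter _ (powersetCard_mono hJ)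

theorem sum_card_zeroSumSubsets_powersetCard (f : ι → A) (K : Finset ι) {t : ℕ} (hst : s ≤ t) :
    ∑ J ∈ K.powersetCard t, #(zeroSumSubsets f J s)
      = (#K - s).choose (t - s) * #(zeroSumSubsets f K s) := by
  classical
  have hJ : ∀ J ∈ K.powersetCard t,
      zeroSumSubsets f J s = bipartiteBelow (· ⊆ ·) (zeroSumSubsets f K s) J := by
    intro J hJ
    ext I
    have hJK := (mem_powersetCard.1 hJ).1
    simp only [bipartiteBelow, mem_filter, mem_zeroSumSubsets]
    exact ⟨fun h ↦ ⟨⟨h.1.trans hJK, h.2⟩, h.1⟩, fun h ↦ ⟨h.2, h.1.2⟩⟩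
  rw [sum_congr rfl fun J h ↦ congrArg card (hJ J h),
    ← sum_card_bipartiteAbove_eq_sum_card_bipartiteBelow, mul_comm]
  refine sum_const_nat fun I hI ↦ ?_
  obtain ⟨hIK, rfl, -⟩ := mem_zeroSumSubsets.1 hI
  exact card_filter_powersetCard_subset I K t hIK hst

end AddCommMonoid

section AddCommGroup

variable [AddCommGroup A] [DecidableEq A] [DecidableEq ι] {f : ι → A} {I K : Finset ι} {s t : ℕ}

theorem sdiff_mem_zeroSumSubsets {D : Finset ι} (hD : D ∈ zeroSumSubsets f K (s + t))
    (hI : I ∈ zeroSumSubsets f D t) : D \ I ∈ zeroSumSubsets f K s := by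
  obtain ⟨hDK, hDc, hDs⟩ := mem_zeroSumSubsets.1 hD
  obtain ⟨hID, hIc, hIs⟩ := mem_zeroSumSubsets.1 hI
  refine mem_zeroSumSubsets.2 ⟨sdiff_subset.trans hDK, by rw [card_sdiff_of_subset hID]; omega, ?_⟩
  rw [sum_sdiff_eq_sub hID, hDs, hIs, sub_zero]

theorem union_mem_zeroSumSubsets {B : Finset ι} (hI : I ∈ zeroSumSubsets f K s)
    (hB : B ∈ zeroSumSubsets f (K \ I) t) : I ∪ B ∈ zeroSumSubsets f K (s + t) := by
  obtain ⟨hIK, rfl, hIs⟩ := mem_zeroSumSubsets.1 hI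
  obtain ⟨hBK, rfl, hBs⟩ := mem_zeroSumSubsets.1 hB
  have hdisj : Disjoint I B := disjoint_sdiff.mono_right hBK
  refine mem_zeroSumSubsets.2 ⟨union_subset hIK (hBK.trans sdiff_subset),
    card_union_of_disjoint hdisj, ?_⟩
  rw [sum_union hdisj, hIs, hBs, add_zero]

theorem sum_card_zeroSumSubsets_sdiff (f : ι → A) (K : Finset ι) (s t : ℕ) :
    ∑ I ∈ zeroSumSubsets f K s, #(zeroSumSubsets f (K \ I) t)
      = ∑ D ∈ zeroSumSubsets f K (s + t), #(zeroSumSubsets f D t) := by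
  simp_rw [← card_sigma]
  refine card_nbij' (fun x ↦ ⟨x.1 ∪ x.2, x.2⟩) (fun x ↦ ⟨x.1 \ x.2, x.2⟩) ?_ ?_ ?_ ?_
  · rintro ⟨I, B⟩ h
    simp only [coe_sigma, Set.mem_sigma_iff, mem_coe] at h ⊢
    have hB := mem_zeroSumSubsets.1 h.2
    exact ⟨union_mem_zeroSumSubsets h.1 h.2, mem_zeroSumSubsets.2 ⟨subset_union_right, hB.2⟩⟩
  · rintro ⟨D, B⟩ h
    simp only [coe_sigma, Set.mem_sigma_iff, mem_coe] at h ⊢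
    have hB := mem_zeroSumSubsets.1 h.2
    exact ⟨sdiff_mem_zeroSumSubsets h.1 h.2, mem_zeroSumSubsets.2
      ⟨subset_sdiff.2 ⟨hB.1.trans (mem_zeroSumSubsets.1 h.1).1, disjoint_sdiff⟩, hB.2⟩⟩
  · rintro ⟨I, B⟩ h
    simp only [coe_sigma, Set.mem_sigma_iff, mem_coe] at h
    have hB := mem_zeroSumSubsets.1 h.2
    simp [union_sdiff_cancel_right (disjoint_sdiff.mono_right hB.1)]
  · rintro ⟨D, B⟩ h
    simp only [coe_sigma, Set.mem_sigma_iff, mem_coe] at h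
    simp [sdiff_union_of_subset (mem_zeroSumSubsets.1 h.2).1]

end AddCommGroup

section ZModPrime

variable [Fact p.Prime] [Fintype κ] {f : ι → κ → ZMod p}

theorem signedCount_eq_sum_card_zeroSumSubsets (f : ι → κ → ZMod p) {J : Finset ι} {a n : ℕ}
    (ha : a < p) (hJ : #J < n * p) :
    signedCount p (fun i o ↦ o.elim 1 (f i)) J (fun o : Option κ ↦ o.elim (a : ZMod p) 0)
      = (-1) ^ a * ∑ k ∈ range n, (-1) ^ k * (#(zeroSumSubsets f J (k * p + a)) : ZMod p) := by
  have hmaps : ∀ I ∈ J.powerset, #I / p ∈ range n := fun I hI ↦ mem_range.2 <|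
    Nat.div_lt_of_lt_mul <| (card_le_card (mem_powerset.1 hI)).trans_lt (by rwa [mul_comm])
  rw [signedCount, mul_sum,
    ← sum_fiberwise_of_maps_to fun I hI ↦ hmaps I (mem_filter.1 hI).1]
  refine sum_congr rfl fun k _ ↦ ?_
  have hfiber : ({I ∈ {I ∈ J.powerset | (∑ i ∈ I, fun o : Option κ ↦ o.elim 1 (f i))
      = fun o ↦ o.elim (a : ZMod p) 0} | #I / p = k}) = zeroSumSubsets f J (k * p + a) := by
    ext I
    have hcard : ((#I : ZMod p) = a ∧ #I / p = k) ↔ #I = k * p + a := by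
      rw [ZMod.natCast_eq_natCast_iff', Nat.mod_eq_of_lt ha, mul_comm, and_comm,
        Nat.div_mod_unique (Nat.zero_lt_of_lt ha)]
      rw [and_iff_left ha, add_comm, mul_comm, eq_comm]
    simp only [mem_filter, mem_powerset, mem_zeroSumSubsets, ← hcard, funext_iff, Option.forall,
      Finset.sum_apply, Option.elim, sum_const, nsmul_eq_mul, mul_one, Pi.zero_apply]
    tauto
  rw [hfiber, sum_congr rfl fun I hI ↦ by rw [(mem_zeroSumSubsets.1 hI).2.1], sum_const,
    nsmul_eq_mul, pow_add, mul_comm k, pow_mul, ZMod.pow_card]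
  ring

theorem alternating_sum_card_zeroSumSubsets {J : Finset ι} {a n : ℕ} (ha : a < p)
    (hJ : (Fintype.card κ + 1) * (p - 1) ≤ #J) (hJn : #J < n * p) :
    (-1) ^ a * ∑ k ∈ range n, (-1) ^ k * (#(zeroSumSubsets f J (k * p + a)) : ZMod p)
      = ∑ k ∈ range n, (-1) ^ k * (#(zeroSumSubsets f J (k * p)) : ZMod p) := by
  have hcard : Fintype.card (Option κ) * (p - 1) ≤ #J := by rwa [Fintype.card_option]
  have h0 := signedCount_eq_sum_card_zeroSumSubsets f (Nat.zero_lt_of_lt ha) hJn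
  rw [← signedCount_eq_sum_card_zeroSumSubsets f ha hJn, signedCount_eq_signedCount_zero hcard,
    ← signedCount_eq_signedCount_zero hcard, h0]
  simp

theorem alternating_sum_card_zeroSumSubsets_eq_zero {J : Finset ι} {a n : ℕ} (ha : a < p)
    (hJ : (Fintype.card κ + 1) * (p - 1) < #J) (hJn : #J < n * p) :
    ∑ k ∈ range n, (-1) ^ k * (#(zeroSumSubsets f J (k * p + a)) : ZMod p) = 0 := by
  have hcard : Fintype.card (Option κ) * (p - 1) < #J := by rwa [Fintype.card_option]
  have h := signedCount_eq_sum_card_zeroSumSubsets f ha hJn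
  rw [signedCount_eq_signedCount_zero hcard.le, signedCount_zero_eq_zero hcard] at h
  exact (mul_eq_zero.1 h.symm).resolve_left (pow_ne_zero _ (neg_ne_zero.2 one_ne_zero))

end ZModPrime

end ZeroSumSubsets

section Kemnitz

open Finset

variable {p : ℕ} [Fact p.Prime] {ι : Type*}

theorem natCast_choose_prime (N : ℕ) : (N.choose p : ZMod p) = (N / p : ℕ) := by
  have hp : p.Prime := Fact.out
  rw [(ZMod.natCast_eq_natCast_iff _ _ _).2 Choose.choose_modEq_choose_mod_mul_choose_div_nat]
  simp [Nat.div_self hp.pos]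

section Reiher

variable {f : ι → Fin 2 → ZMod p} {J K : Finset ι}

theorem card_zeroSumSubsets_two_mul_eq_neg_one (h : zeroSumSubsets f J p = ∅)
    (hJ : 3 * p < #J + 3) (hJp : #J < 3 * p) :
    (#(zeroSumSubsets f J (2 * p)) : ZMod p) = -1 := by
  have hp : p.Prime := Fact.out
  have h3 := alternating_sum_card_zeroSumSubsets_eq_zero (f := f) hp.pos
    (by rw [Fintype.card_fin]; omega) hJp
  simp only [sum_range_succ, sum_range_zero, zero_mul, add_zero, one_mul, h, card_empty,
    card_zeroSumSubsets_zero] at h3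
  linear_combination h3

theorem zeroSumSubsets_three_mul_eq_empty (h : zeroSumSubsets f K p = ∅) :
    zeroSumSubsets f K (3 * p) = ∅ := by
  classical
  have hp : p.Prime := Fact.out
  rw [eq_empty_iff_forall_notMem]
  intro D hD
  obtain ⟨hDK, hDc, -⟩ := mem_zeroSumSubsets.1 hD
  obtain ⟨x, hx⟩ : D.Nonempty := card_pos.1 (by have := hp.pos; omega)
  have hcount := card_zeroSumSubsets_two_mul_eq_neg_one
    (zeroSumSubsets_eq_empty_mono h ((erase_subset x D).trans hDK))
    (by rw [card_erase_of_mem hx]; have := hp.two_le; omega)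
    (by rw [card_erase_of_mem hx]; have := hp.pos; omega)
  obtain ⟨I, hI⟩ : (zeroSumSubsets f (D.erase x) (2 * p)).Nonempty := by
    by_contra! hempty
    simp [hempty] at hcount
  obtain ⟨hID, hI⟩ := mem_zeroSumSubsets.1 hI
  rw [show 3 * p = p + 2 * p by ring] at hD
  have hDI := sdiff_mem_zeroSumSubsets hD
    (mem_zeroSumSubsets.2 ⟨hID.trans (erase_subset x D), hI⟩)
  simp [h] at hDI

theorem card_zeroSumSubsets_two_mul_of_card_eq (h : zeroSumSubsets f K p = ∅)
    (hK : #K + 3 = 4 * p) :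
    (#(zeroSumSubsets f K (2 * p)) : ZMod p) = -1 := by
  have hp : p.Prime := Fact.out
  have h4 := alternating_sum_card_zeroSumSubsets_eq_zero (f := f) (J := K) (n := 4) hp.pos
    (by rw [Fintype.card_fin]; have := hp.two_le; omega) (by omega)
  simp only [sum_range_succ, sum_range_zero, zero_mul, add_zero, one_mul, h, card_empty,
    card_zeroSumSubsets_zero, zeroSumSubsets_three_mul_eq_empty h] at h4
  linear_combination h4

theorem card_zeroSumSubsets_pred_eq (h : zeroSumSubsets f K p = ∅) (hK : #K + 3 = 4 * p) :
    (#(zeroSumSubsets f K (p - 1)) : ZMod p) = #(zeroSumSubsets f K (3 * p - 1)) := by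
  classical
  have hp : p.Prime := Fact.out
  have hp2 := hp.two_le
  have h2p {J : Finset ι} (hJK : J ⊆ K) (hJ : 3 * p < #J + 3) (hJp : #J < 3 * p) :
      (#(zeroSumSubsets f J (2 * p)) : ZMod p) = -1 :=
    card_zeroSumSubsets_two_mul_eq_neg_one (zeroSumSubsets_eq_empty_mono h hJK) hJ hJp
  have hdouble := congrArg (Nat.cast (R := ZMod p))
    (sum_card_zeroSumSubsets_sdiff f K (p - 1) (2 * p))
  rw [show p - 1 + 2 * p = 3 * p - 1 by omega] at hdouble
  push_cast at hdouble
  rw [sum_congr rfl (g := fun _ ↦ (-1 : ZMod p)) fun I hI ↦ ?_,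
    sum_congr rfl (s₁ := zeroSumSubsets f K (3 * p - 1)) (g := fun _ ↦ (-1 : ZMod p))
      fun D hD ↦ ?_] at hdouble
  · simpa using hdouble
  · obtain ⟨hDK, hDc, -⟩ := mem_zeroSumSubsets.1 hD
    exact h2p hDK (by omega) (by omega)
  · obtain ⟨hIK, hIc, -⟩ := mem_zeroSumSubsets.1 hI
    have := card_sdiff_of_subset hIK
    exact h2p sdiff_subset (by omega) (by omega)

theorem one_add_card_zeroSumSubsets_two_mul (h : zeroSumSubsets f J p = ∅)
    (hJ : #J + 3 = 3 * p) : 1 + (#(zeroSumSubsets f J (2 * p)) : ZMod p)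
      = #(zeroSumSubsets f J (p - 1)) - #(zeroSumSubsets f J (2 * p - 1)) := by
  have hp : 2 ≤ p := (Fact.out : p.Prime).two_le
  have h3 := alternating_sum_card_zeroSumSubsets (f := f) (J := J) (a := p - 1) (n := 3)
    (by omega) (by rw [Fintype.card_fin]; omega) (by omega)
  have h3p : zeroSumSubsets f J (2 * p + (p - 1)) = ∅ :=
    zeroSumSubsets_eq_empty_of_card_lt (by omega)
  rw [ZMod.pow_card_sub_one_eq_one (neg_ne_zero.2 one_ne_zero)] at h3
  simp only [sum_range_succ, sum_range_zero, zero_mul, zero_add, one_mul, h3p, card_empty,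
    card_zeroSumSubsets_zero, h, show p + (p - 1) = 2 * p - 1 by omega] at h3
  linear_combination -h3

theorem sum_natCast_card_zeroSumSubsets {s t q : ℕ} (hst : s ≤ t) (hK : #K = t + p)
    (hq : q * p + s ≤ #K) (hq' : #K < (q + 1) * p + s) :
    ∑ J ∈ K.powersetCard t, (#(zeroSumSubsets f J s) : ZMod p) = q * #(zeroSumSubsets f K s) := by
  rw [← Nat.cast_sum, sum_card_zeroSumSubsets_powersetCard f K hst, Nat.cast_mul,
    Nat.choose_symm_of_eq_add (b := p) (by omega), natCast_choose_prime,
    Nat.div_eq_of_lt_le (k := q) (by omega) (by omega)]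

theorem three_add_card_zeroSumSubsets_two_mul (hp2 : 2 < p) (h : zeroSumSubsets f K p = ∅)
    (hK : #K + 3 = 4 * p) : 3 + (#(zeroSumSubsets f K (2 * p)) : ZMod p)
      = 2 * #(zeroSumSubsets f K (p - 1)) - #(zeroSumSubsets f K (2 * p - 1)) := by
  have hJ : ∀ J ∈ K.powersetCard (3 * p - 3),
      (#(zeroSumSubsets f J 0) : ZMod p) + #(zeroSumSubsets f J (2 * p))
        = #(zeroSumSubsets f J (p - 1)) - #(zeroSumSubsets f J (2 * p - 1)) := by
    intro J hJ
    obtain ⟨hJK, hJc⟩ := mem_powersetCard.1 hJ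
    rw [card_zeroSumSubsets_zero, Nat.cast_one]
    exact one_add_card_zeroSumSubsets_two_mul (zeroSumSubsets_eq_empty_mono h hJK) (by omega)
  have hsum := sum_congr rfl hJ
  rw [sum_add_distrib, sum_sub_distrib,
    sum_natCast_card_zeroSumSubsets (q := 3) (by omega) (by omega) (by omega) (by omega),
    sum_natCast_card_zeroSumSubsets (q := 1) (by omega) (by omega) (by omega) (by omega),
    sum_natCast_card_zeroSumSubsets (q := 2) (by omega) (by omega) (by omega) (by omega),
    sum_natCast_card_zeroSumSubsets (q := 1) (by omega) (by omega) (by omega) (by omega),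
    card_zeroSumSubsets_zero] at hsum
  push_cast at hsum
  linear_combination hsum

/-- Kemnitz's conjecture for an odd prime, by Reiher's argument. -/
theorem zeroSumSubsets_nonempty_of_card_eq (hp2 : 2 < p) (hK : #K + 3 = 4 * p) :
    (zeroSumSubsets f K p).Nonempty := by
  by_contra! h
  have h4 := alternating_sum_card_zeroSumSubsets_eq_zero (f := f) (J := K) (a := p - 1) (n := 4)
    (by omega) (by rw [Fintype.card_fin]; omega) (by omega)
  have h4p : zeroSumSubsets f K (3 * p + (p - 1)) = ∅ :=
    zeroSumSubsets_eq_empty_of_card_lt (by omega)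
  simp only [sum_range_succ, sum_range_zero, zero_mul, zero_add, one_mul, h4p, card_empty,
    show p + (p - 1) = 2 * p - 1 by omega, show 2 * p + (p - 1) = 3 * p - 1 by omega,
    ← card_zeroSumSubsets_pred_eq h hK] at h4
  have h2 : ((2 : ℕ) : ZMod p) = 0 := by
    push_cast
    linear_combination h4 + three_add_card_zeroSumSubsets_two_mul hp2 h hK
      - card_zeroSumSubsets_two_mul_of_card_eq h hK
  exact Nat.not_dvd_of_pos_of_lt two_pos hp2 ((ZMod.natCast_eq_zero_iff _ _).1 h2)

end Reiher

theorem zeroSumSubsets_two_nonempty {f : ι → Fin 2 → ZMod 2} {K : Finset ι} (hK : 4 < #K) :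
    (zeroSumSubsets f K 2).Nonempty := by
  classical
  obtain ⟨i, hi, j, hj, hij, hf⟩ := exists_ne_map_eq_of_card_lt_of_maps_to
    (t := (univ : Finset (Fin 2 → ZMod 2))) (by simpa using hK) (f := f) (by simp)
  refine ⟨{i, j}, mem_zeroSumSubsets.2 ⟨by simp [insert_subset_iff, hi, hj], card_pair hij, ?_⟩⟩
  rw [sum_pair hij, hf]
  exact CharTwo.add_self_eq_zero _

theorem zeroSumSubsets_prime_nonempty (f : ι → Fin 2 → ZMod p) {K : Finset ι}
    (hK : 4 * p ≤ #K + 3) :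
    (zeroSumSubsets f K p).Nonempty := by
  have hp : p.Prime := Fact.out
  obtain ⟨L, hLK, hL⟩ := exists_subset_card_eq (show 4 * p - 3 ≤ #K by omega)
  have hmono : zeroSumSubsets f L p ⊆ zeroSumSubsets f K p :=
    filter_subset_filter _ (powersetCard_mono hLK)
  refine Nonempty.mono hmono ?_
  obtain rfl | hp2 := hp.eq_two_or_odd'
  · exact zeroSumSubsets_two_nonempty (by omega)
  · have := hp.two_le
    exact zeroSumSubsets_nonempty_of_card_eq (by obtain ⟨k, rfl⟩ := hp2; omega) (by omega)

end Kemnitz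

section ZeroSumSubmultisets

variable {p : ℕ} {α κ : Type*} {S : Multiset α}

theorem exists_le_card_eq_prime_forall_sum_map_eq_zero [Fact p.Prime] (f : α → Fin 2 → ZMod p)
    (hS : 4 * p ≤ S.card + 3) :
    ∃ B ≤ S, B.card = p ∧ ∀ k, (B.map (f · k)).sum = 0 := by
  classical
  obtain ⟨I, hI⟩ := zeroSumSubsets_prime_nonempty (fun i : α × ℕ ↦ f i.1) (K := S.toEnumFinset)
    (by rwa [Multiset.card_toEnumFinset])
  obtain ⟨hIS, hIc, hIs⟩ := mem_zeroSumSubsets.1 hI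
  refine ⟨I.1.map Prod.fst, Multiset.map_fst_le_of_subset_toEnumFinset hIS, by simpa, fun k ↦ ?_⟩
  rw [Multiset.map_map]
  exact (Finset.sum_apply k I _).symm.trans (congrFun hIs k)

theorem exists_le_ne_zero_forall_sum_map_eq_zero [Fact p.Prime] [Fintype κ] (f : α → κ → ZMod p)
    (hS : Fintype.card κ * (p - 1) < S.card) :
    ∃ B ≤ S, B ≠ 0 ∧ ∀ k, (B.map (f · k)).sum = 0 := by
  classical
  obtain ⟨I, hIS, hI0, hIs⟩ := exists_nonempty_sum_eq_zero (J := S.toEnumFinset)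
    (v := fun i : α × ℕ ↦ f i.1) (by rwa [Multiset.card_toEnumFinset])
  refine ⟨I.1.map Prod.fst, Multiset.map_fst_le_of_subset_toEnumFinset hIS,
    by simpa using hI0.ne_empty, fun k ↦ ?_⟩
  rw [Multiset.map_map]
  exact (Finset.sum_apply k I _).symm.trans (congrFun hIs k)

theorem exists_le_card_eq_sum_map_eq_zero {n : ℕ} (f : α → ZMod n) (hS : 2 * n - 1 ≤ S.card) :
    ∃ B ≤ S, B.card = n ∧ (B.map f).sum = 0 := by
  classical
  obtain ⟨I, hIS, hIc, hIs⟩ := ZMod.erdos_ginzburg_ziv (s := S.toEnumFinset)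
    (fun i : α × ℕ ↦ f i.1) (by rwa [Multiset.card_toEnumFinset])
  refine ⟨I.1.map Prod.fst, Multiset.map_fst_le_of_subset_toEnumFinset hIS, by simpa, ?_⟩
  rw [Multiset.map_map]
  exact hIs

end ZeroSumSubmultisets

section Subproducts

variable {M : Type*} [Monoid M] {S T U V : Multiset M} {x y : M}

/-- The products of the subsequences of `S`, multiplied in an arbitrary order. The empty
subsequence is allowed. -/
def subproducts (S : Multiset M) : Set M :=
  {x | ∃ l : List M, (l : Multiset M) ≤ S ∧ l.prod = x}

theorem subproducts_mono (h : S ≤ T) : subproducts S ⊆ subproducts T :=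
  fun _ ⟨l, hl, hx⟩ ↦ ⟨l, hl.trans h, hx⟩

theorem prod_toList_mem_subproducts (h : T ≤ S) : T.toList.prod ∈ subproducts S :=
  ⟨T.toList, by rwa [Multiset.coe_toList], rfl⟩

/-- `U` arises from `S` by replacing disjoint subsequences of `S` by their products: whatever is
added to both, every subproduct of the first is one of the second. -/
def Condenses (U S : Multiset M) : Prop :=
  ∀ Z, subproducts (U + Z) ⊆ subproducts (S + Z)

namespace Condenses

theorem subproducts_subset (h : Condenses U S) : subproducts U ⊆ subproducts S := by
  simpa using h 0

theorem trans (hUV : Condenses U V) (hVS : Condenses V S) : Condenses U S :=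
  fun Z ↦ (hUV Z).trans (hVS Z)

theorem add_right (h : Condenses U S) (V : Multiset M) : Condenses (U + V) (S + V) := by
  intro Z
  simpa only [add_assoc] using h (V + Z)

theorem add_left (h : Condenses U S) (V : Multiset M) : Condenses (V + U) (V + S) := by
  simpa only [add_comm V] using h.add_right V

theorem singleton (hx : x ∈ subproducts S) : Condenses {x} S := by
  rintro Z _ ⟨l, hl, rfl⟩
  rw [Multiset.singleton_add] at hl
  by_cases hxl : x ∈ l
  · obtain ⟨b, hb, rfl⟩ := hx
    obtain ⟨l₁, l₂, rfl⟩ := List.append_of_mem hxl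
    have hZ : (l₁ : Multiset M) + l₂ ≤ Z := by
      rwa [← Multiset.coe_add, ← Multiset.cons_coe, Multiset.add_cons,
        Multiset.cons_le_cons_iff] at hl
    refine ⟨l₁ ++ (b ++ l₂), ?_, by simp⟩
    rw [← Multiset.coe_add, ← Multiset.coe_add, add_left_comm]
    exact add_le_add hb hZ
  · exact ⟨l, ((Multiset.le_cons_of_notMem (by simpa using hxl)).1 hl).trans
      (Multiset.le_add_left _ _), rfl⟩

end Condenses

theorem exists_condenses_of_blocks {P Q : M → Prop} {N p R : ℕ}
    (hblock : ∀ S : Multiset M, (∀ x ∈ S, Q x) → N ≤ S.card →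
      ∃ B ≤ S, B.card = p ∧ ∃ y ∈ subproducts B, P y)
    (hN : N ≤ p + R) (k : ℕ) (hQ : ∀ x ∈ S, Q x) (hS : k * p + R ≤ S.card) :
    ∃ U, ∃ S' ≤ S, U.card = k ∧ (∀ y ∈ U, P y) ∧ R ≤ S'.card ∧ Condenses (U + S') S := by
  classical
  induction k generalizing S with
  | zero => exact ⟨0, S, le_rfl, rfl, by simp, by simpa using hS, fun Z ↦ by rw [zero_add]⟩
  | succ k ih =>
    rw [add_one_mul] at hS
    obtain ⟨B, hBS, rfl, y, hyB, hy⟩ := hblock S hQ (by omega)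
    have hcard := Multiset.card_sub hBS
    obtain ⟨U, S', hS', hUk, hUP, hR, hU⟩ := ih
      (fun x hx ↦ hQ x (Multiset.mem_of_le (Multiset.sub_le_self S B) hx)) (by omega)
    refine ⟨{y} + U, S', hS'.trans (Multiset.sub_le_self S B), by simp [hUk, add_comm],
      by simpa using ⟨hy, hUP⟩, hR, ?_⟩
    rw [add_assoc, ← add_tsub_cancel_of_le hBS]
    exact (hU.add_left {y}).trans ((Condenses.singleton hyB).add_right (S - B))

end Subproducts

theorem exists_le_card_eq {α : Type*} {S : Multiset α} {n : ℕ} (h : n ≤ S.card) :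
    ∃ T ≤ S, T.card = n := by
  induction S using Quotient.inductionOn with
  | _ l => exact ⟨l.take n, (l.take_sublist n).subperm, List.length_take_of_le h⟩

section Arithmetic

theorem mul_dvd_sum_map {α : Type*} {g : α → ℕ} {B : Multiset α} {s n : ℕ} (hg : ∀ x ∈ B, s ∣ g x)
    (h : (B.map fun x ↦ ((g x / s : ℕ) : ZMod n)).sum = 0) : s * n ∣ (B.map g).sum := by
  rw [Multiset.map_congr rfl fun x hx ↦ (Nat.mul_div_cancel' (hg x hx)).symm,
    Multiset.sum_map_mul_left]
  refine mul_dvd_mul_left s ((ZMod.natCast_eq_zero_iff _ _).1 ?_)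
  rw [← h, Nat.cast_multiset_sum, Multiset.map_map]
  rfl

theorem modEq_one_of_pow_modEq_one_minFac {a m : ℕ} (hm : 1 < m)
    (h : a ^ m ≡ 1 [MOD m.minFac]) : a ≡ 1 [MOD m.minFac] := by
  have : Fact m.minFac.Prime := ⟨Nat.minFac_prime hm.ne'⟩
  have hp1 : 0 < m.minFac - 1 := Nat.sub_pos_of_lt (Fact.out : m.minFac.Prime).one_lt
  have hcop : m.Coprime (m.minFac - 1) := Nat.coprime_of_lt_minFac hp1.ne' (by omega)
  rw [← ZMod.natCast_eq_natCast_iff, Nat.cast_pow, Nat.cast_one] at h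
  rw [← ZMod.natCast_eq_natCast_iff, Nat.cast_one]
  have ha : (a : ZMod m.minFac) ≠ 0 := by
    intro ha
    rw [ha, zero_pow (by omega)] at h
    exact zero_ne_one h
  rw [← orderOf_eq_one_iff, ← Nat.dvd_one, ← hcop]
  exact Nat.dvd_gcd (orderOf_dvd_of_pow_eq_one h)
    (orderOf_dvd_of_pow_eq_one (ZMod.pow_card_sub_one_eq_one ha))

@[elab_as_elim]
theorem induction_on_minFac {motive : ∀ m : ℕ, 0 < m → Prop} (one : motive 1 one_pos)
    (minFac_mul : ∀ (p m : ℕ) (hp : p.Prime) (hm : 0 < m), (p * m).minFac = p → motive m hm →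
      motive (p * m) (Nat.mul_pos hp.pos hm))
    (m : ℕ) (hm : 0 < m) : motive m hm := by
  induction m using Nat.strong_induction_on with
  | _ m ih =>
    obtain rfl | hm1 := eq_or_ne m 1
    · exact one
    · obtain ⟨k, hk⟩ := Nat.minFac_dvd m
      have hp := Nat.minFac_prime hm1
      generalize hpm : m.minFac = p at hk hp
      subst hk
      have hk0 : 0 < k := Nat.pos_of_mul_pos_left hm
      exact minFac_mul p k hp hk0 hpm (ih k (lt_mul_of_one_lt_left hk0 hp.one_lt) hk0)

theorem modEq_one_of_pow_modEq_one_minFac_mul {r t m n p : ℕ} (hp : p.Prime) (hm : 0 < m)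
    (hpm : (p * m).minFac = p) (hr : r ^ (t * (p * m)) ≡ 1 [MOD p * m * n]) :
    r ^ t ≡ 1 [MOD p] := by
  have hrp : (r ^ t) ^ (p * m) ≡ 1 [MOD (p * m).minFac] := by
    rw [hpm, ← pow_mul]
    exact (hr.of_mul_right n).of_mul_right m
  have h := modEq_one_of_pow_modEq_one_minFac
    (hp.one_lt.trans_le (Nat.le_mul_of_pos_right p hm)) hrp
  rwa [hpm] at h

theorem sub_mul_add_mul_pred {a c p : ℕ} (hc : c ≤ a) (hp : 0 < p) :
    (a - c) * p + c * (p - 1) = a * p - c := by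
  obtain ⟨b, rfl⟩ := Nat.exists_eq_add_of_le hc
  obtain ⟨q, rfl⟩ := Nat.exists_eq_succ_of_ne_zero hp.ne'
  refine Nat.eq_sub_of_add_eq ?_
  rw [Nat.add_sub_cancel_left, Nat.succ_sub_one, Nat.succ_eq_add_one]
  ring

end Arithmetic

/-- Exponents `left`, `right` of `α ^ left * β ^ right`, where `β * α = α ^ r * β`, together with
an additive `weight` counting the terms of a product. Working with exponents in `ℕ` rather than
with group elements keeps their divisibility visible; the relations `α ^ (m * n) = 1` and
`β ^ m = 1` are only imposed at the very end. -/
@[ext]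
structure LiftMonoid (r : ℕ) where
  left : ℕ
  right : ℕ
  weight : ℕ

namespace LiftMonoid

variable {r : ℕ}

instance : One (LiftMonoid r) := ⟨⟨0, 0, 0⟩⟩

instance : Mul (LiftMonoid r) :=
  ⟨fun x y ↦ ⟨x.left + r ^ x.right * y.left, x.right + y.right, x.weight + y.weight⟩⟩

@[simp]
theorem left_one : (1 : LiftMonoid r).left = 0 := rfl

@[simp]
theorem right_one : (1 : LiftMonoid r).right = 0 := rfl

@[simp]
theorem weight_one : (1 : LiftMonoid r).weight = 0 := rfl

@[simp]
theorem left_mul (x y : LiftMonoid r) : (x * y).left = x.left + r ^ x.right * y.left := rfl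

@[simp]
theorem right_mul (x y : LiftMonoid r) : (x * y).right = x.right + y.right := rfl

@[simp]
theorem weight_mul (x y : LiftMonoid r) : (x * y).weight = x.weight + y.weight := rfl

instance : Monoid (LiftMonoid r) where
  one_mul x := by ext <;> simp
  mul_one x := by ext <;> simp
  mul_assoc x y z := by ext <;> simp [pow_add, mul_add, mul_assoc, add_assoc]

theorem right_list_prod (l : List (LiftMonoid r)) : l.prod.right = (l.map right).sum := by
  induction l with
  | nil => rfl
  | cons x l ih => rw [List.prod_cons, right_mul, ih, List.map_cons, List.sum_cons]

theorem weight_list_prod (l : List (LiftMonoid r)) : l.prod.weight = (l.map weight).sum := by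
  induction l with
  | nil => rfl
  | cons x l ih => rw [List.prod_cons, weight_mul, ih, List.map_cons, List.sum_cons]

/-- The elements whose `left` and `weight` are multiples of `s` and whose `right` is a multiple of
`t`. Up to scaling, they multiply as in `LiftMonoid (r ^ t)`. -/
def level (r s t : ℕ) : Submonoid (LiftMonoid r) where
  carrier := {x | s ∣ x.left ∧ t ∣ x.right ∧ s ∣ x.weight}
  one_mem' := ⟨dvd_zero _, dvd_zero _, dvd_zero _⟩
  mul_mem' hx hy := ⟨dvd_add hx.1 (hy.1.mul_left _), dvd_add hx.2.1 hy.2.1,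
    dvd_add hx.2.2 hy.2.2⟩

theorem left_list_prod_modEq {s t n : ℕ} (hr : r ^ t ≡ 1 [MOD n]) {l : List (LiftMonoid r)}
    (hl : ∀ x ∈ l, x ∈ level r s t) : l.prod.left ≡ (l.map left).sum [MOD s * n] := by
  induction l with
  | nil => rfl
  | cons x l ih =>
    rw [List.forall_mem_cons] at hl
    obtain ⟨c, hc⟩ := ((level r s t).list_prod_mem hl.2).1
    obtain ⟨b, hb⟩ := hl.1.2.1
    have hact : r ^ x.right * l.prod.left ≡ l.prod.left [MOD s * n] := by
      have hrb : (r ^ t) ^ b * c ≡ c [MOD n] := by simpa using (hr.pow b).mul_right c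
      rw [hb, hc, pow_mul, mul_left_comm]
      exact hrb.mul_left' s
    rw [List.prod_cons, left_mul, List.map_cons, List.sum_cons]
    exact (hact.trans (ih hl.2)).add_left _

theorem prod_toList_mem_level {s t n k : ℕ} (hr : r ^ t ≡ 1 [MOD n])
    {B : Multiset (LiftMonoid r)} (hB : ∀ x ∈ B, x ∈ level r s t)
    (hleft : s * n ∣ (B.map left).sum) (hright : t * k ∣ (B.map right).sum)
    (hweight : s * n ∣ (B.map weight).sum) : B.toList.prod ∈ level r (s * n) (t * k) := by
  have hl := left_list_prod_modEq hr (l := B.toList) (by simpa using hB)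
  refine ⟨(hl.dvd_iff dvd_rfl).2 ?_, ?_, ?_⟩
  · rwa [Multiset.sum_map_toList]
  · rwa [right_list_prod, Multiset.sum_map_toList]
  · rwa [weight_list_prod, Multiset.sum_map_toList]

/-- The elements of level `(s, t)` that play the role of a single term of a sequence. -/
def Normalized (s t : ℕ) (x : LiftMonoid r) : Prop :=
  x ∈ level r s t ∧ x.weight = s

theorem sum_weight_eq {s t : ℕ} {S : Multiset (LiftMonoid r)} (hS : ∀ x ∈ S, Normalized s t x) :
    (S.map weight).sum = S.card * s := by
  rw [Multiset.map_congr rfl fun x hx ↦ (hS x hx).2]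
  simp

theorem weight_list_prod_eq {s t : ℕ} {l : List (LiftMonoid r)} (hl : ∀ x ∈ l, Normalized s t x) :
    l.prod.weight = l.length * s := by
  have h := sum_weight_eq (S := (l : Multiset (LiftMonoid r))) hl
  rwa [Multiset.map_coe, Multiset.sum_coe, Multiset.coe_card, ← weight_list_prod] at h

variable {s t s₁ t₁ s₂ t₂ m n p N R k : ℕ}

/-- Every sequence of at least `N` normalized elements of level `(s, t)` has a subproduct that is
a normalized element of level `(s', t')`. -/
def HasNormalizedSubproduct (r s t s' t' N : ℕ) : Prop :=
  ∀ S : Multiset (LiftMonoid r), (∀ x ∈ S, Normalized s t x) → N ≤ S.card →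
    ∃ y ∈ subproducts S, Normalized s' t' y

/-- Every sequence of at least `N` normalized elements of level `(s, t)` together with one more
element of this level, of arbitrary positive weight, has a subproduct of positive weight in level
`(s', t')`. Here positivity of the weight serves to exclude the empty product. -/
def HasLevelSubproduct (r s t s' t' N : ℕ) : Prop :=
  ∀ x ∈ level r s t, 0 < x.weight → ∀ S : Multiset (LiftMonoid r), (∀ x ∈ S, Normalized s t x) →
    N ≤ S.card → ∃ y ∈ subproducts (x ::ₘ S), y ∈ level r s' t' ∧ 0 < y.weight

theorem HasNormalizedSubproduct.exists_condenses (hs : 0 < s)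
    (h : HasNormalizedSubproduct r s t (s * p) t₁ N) (hN : N ≤ p + R) (k : ℕ)
    {S : Multiset (LiftMonoid r)} (hS : ∀ x ∈ S, Normalized s t x) (hcard : k * p + R ≤ S.card) :
    ∃ U, ∃ S' ≤ S, U.card = k ∧ (∀ y ∈ U, Normalized (s * p) t₁ y) ∧ R ≤ S'.card ∧
      Condenses (U + S') S := by
  refine exists_condenses_of_blocks (fun T hT hTN ↦ ?_) hN k hS hcard
  obtain ⟨_, ⟨l, hlT, rfl⟩, hl⟩ := h T hT hTN
  refine ⟨l, hlT, Nat.eq_of_mul_eq_mul_left hs ?_, l.prod, ⟨l, le_rfl, rfl⟩, hl⟩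
  rw [Multiset.coe_card, mul_comm, ← hl.2,
    weight_list_prod_eq fun x hx ↦ hT x (Multiset.mem_of_le hlT hx)]

theorem HasNormalizedSubproduct.trans (hs : 0 < s)
    (h : HasNormalizedSubproduct r s t (s * p) t₁ N) (hN : N ≤ p + R)
    (h' : HasNormalizedSubproduct r (s * p) t₁ s₂ t₂ k) :
    HasNormalizedSubproduct r s t s₂ t₂ (k * p + R) := by
  intro S hS hcard
  obtain ⟨U, S', -, hUk, hU, -, hUS⟩ := h.exists_condenses hs hN k hS hcard
  obtain ⟨y, hyU, hy⟩ := h' U hU hUk.ge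
  exact ⟨y, hUS.subproducts_subset (subproducts_mono (Multiset.le_add_right U S') hyU), hy⟩

theorem HasLevelSubproduct.trans (hs : 0 < s)
    (hA : HasLevelSubproduct r s t (s * p) t₁ R)
    (h : HasNormalizedSubproduct r s t (s * p) t₁ N) (hN : N ≤ p + R)
    (hA' : HasLevelSubproduct r (s * p) t₁ s₂ t₂ k) :
    HasLevelSubproduct r s t s₂ t₂ (k * p + R) := by
  intro x hx hxw S hS hcard
  obtain ⟨U, S', hS'S, hUk, hU, hR, hUS⟩ := h.exists_condenses hs hN k hS hcard
  obtain ⟨z, hzS', hz, hzw⟩ := hA x hx hxw S' (fun y hy ↦ hS y (Multiset.mem_of_le hS'S hy)) hR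
  obtain ⟨y, hy, hlevel⟩ := hA' z hz hzw U hU hUk.ge
  have hzU : Condenses (z ::ₘ U) (x ::ₘ S) := by
    have h₁ := (Condenses.singleton hzS').add_right U
    have h₂ := hUS.add_left {x}
    rw [Multiset.singleton_add, Multiset.cons_add, add_comm] at h₁
    rw [Multiset.singleton_add, Multiset.singleton_add] at h₂
    exact h₁.trans h₂
  exact ⟨y, hzU.subproducts_subset hy, hlevel⟩

theorem hasNormalizedSubproduct_kemnitz (hp : p.Prime) (hr : r ^ t ≡ 1 [MOD p]) :
    HasNormalizedSubproduct r s t (s * p) (t * p) (4 * p - 3) := by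
  have : Fact p.Prime := ⟨hp⟩
  intro S hS hcard
  obtain ⟨B, hBS, hBp, hB⟩ := exists_le_card_eq_prime_forall_sum_map_eq_zero
    (fun x : LiftMonoid r ↦ ![((x.left / s : ℕ) : ZMod p), ((x.right / t : ℕ) : ZMod p)])
    (S := S) (by omega)
  have hBn : ∀ x ∈ B, Normalized s t x := fun x hx ↦ hS x (Multiset.mem_of_le hBS hx)
  have hw : (B.map weight).sum = s * p := by rw [sum_weight_eq hBn, hBp, mul_comm]
  refine ⟨B.toList.prod, prod_toList_mem_subproducts hBS, prod_toList_mem_level hr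
    (fun x hx ↦ (hBn x hx).1) (mul_dvd_sum_map (fun x hx ↦ (hBn x hx).1.1) (hB 0))
    (mul_dvd_sum_map (fun x hx ↦ (hBn x hx).1.2.1) (hB 1)) hw.symm.dvd, ?_⟩
  rw [weight_list_prod, Multiset.sum_map_toList, hw]

theorem hasNormalizedSubproduct_erdos_ginzburg_ziv (hr : r ^ t ≡ 1 [MOD n]) :
    HasNormalizedSubproduct r s t (s * n) t (2 * n - 1) := by
  intro S hS hcard
  obtain ⟨B, hBS, hBn, hB⟩ := exists_le_card_eq_sum_map_eq_zero
    (fun x : LiftMonoid r ↦ ((x.left / s : ℕ) : ZMod n)) hcard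
  have hBS' : ∀ x ∈ B, Normalized s t x := fun x hx ↦ hS x (Multiset.mem_of_le hBS hx)
  have hw : (B.map weight).sum = s * n := by rw [sum_weight_eq hBS', hBn, mul_comm]
  have hright : t ∣ (B.map right).sum := Multiset.dvd_sum fun b hb ↦ by
    obtain ⟨x, hx, rfl⟩ := Multiset.mem_map.1 hb
    exact (hBS' x hx).1.2.1
  have hlevel := prod_toList_mem_level (k := 1) hr (fun x hx ↦ (hBS' x hx).1)
    (mul_dvd_sum_map (fun x hx ↦ (hBS' x hx).1.1) hB) (by rwa [mul_one]) hw.symm.dvd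
  rw [mul_one] at hlevel
  exact ⟨B.toList.prod, prod_toList_mem_subproducts hBS, hlevel, by
    rw [weight_list_prod, Multiset.sum_map_toList, hw]⟩

theorem hasNormalizedSubproduct_mul (hs : 0 < s) (hn : 0 < n) (hm : 0 < m)
    (hr : r ^ (t * m) ≡ 1 [MOD m * n]) :
    HasNormalizedSubproduct r s t (s * (m * n)) (t * m) (2 * (m * n) + 2 * m - 3) := by
  induction m, hm using induction_on_minFac generalizing s t with
  | one =>
    simpa using hasNormalizedSubproduct_erdos_ginzburg_ziv (s := s) (by simpa using hr)
  | minFac_mul p m hp hm hpm ih =>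
    have hrp := modEq_one_of_pow_modEq_one_minFac_mul hp hm hpm hr
    have hmn : 0 < m * n := Nat.mul_pos hm hn
    have h := (hasNormalizedSubproduct_kemnitz (s := s) hp hrp).trans hs
      (by have := hp.two_le; omega : 4 * p - 3 ≤ p + 3 * (p - 1))
      (ih (Nat.mul_pos hs hp.pos) (by
        rw [mul_assoc t p m]
        exact (mul_assoc p m n ▸ hr).of_mul_left p))
    rw [sub_mul_add_mul_pred (by omega) hp.pos] at h
    simpa only [mul_add, mul_assoc, mul_comm, mul_left_comm] using h

theorem hasLevelSubproduct_of_forall_sum_map_eq_zero {κ : Type*} [Fintype κ] [Fact p.Prime]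
    (hs : 0 < s) (f : LiftMonoid r → κ → ZMod p)
    (hf : ∀ B : Multiset (LiftMonoid r), (∀ x ∈ B, x ∈ level r s t) →
      (∀ k, (B.map (f · k)).sum = 0) → B.toList.prod ∈ level r s₁ t₁) :
    HasLevelSubproduct r s t s₁ t₁ (Fintype.card κ * (p - 1)) := by
  intro x hx hxw S hS hcard
  have hxS : ∀ y ∈ x ::ₘ S, y ∈ level r s t ∧ 0 < y.weight :=
    Multiset.forall_mem_cons.2 ⟨⟨hx, hxw⟩, fun y hy ↦ ⟨(hS y hy).1, hs.trans_eq (hS y hy).2.symm⟩⟩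
  obtain ⟨B, hB, hB0, hsum⟩ := exists_le_ne_zero_forall_sum_map_eq_zero f (S := x ::ₘ S)
    (by rw [Multiset.card_cons]; omega)
  have hBS : ∀ y ∈ B, y ∈ level r s t ∧ 0 < y.weight :=
    fun y hy ↦ hxS y (Multiset.mem_of_le hB hy)
  obtain ⟨y, hy⟩ := Multiset.exists_mem_of_ne_zero hB0
  refine ⟨B.toList.prod, prod_toList_mem_subproducts hB, hf B (fun y hy ↦ (hBS y hy).1) hsum, ?_⟩
  rw [weight_list_prod, Multiset.sum_map_toList]
  exact (hBS y hy).2.trans_le (Multiset.single_le_sum (by simp) _ (Multiset.mem_map_of_mem _ hy))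

theorem hasLevelSubproduct_rank_three (hs : 0 < s) (hp : p.Prime) (hr : r ^ t ≡ 1 [MOD p]) :
    HasLevelSubproduct r s t (s * p) (t * p) (3 * (p - 1)) := by
  have : Fact p.Prime := ⟨hp⟩
  refine hasLevelSubproduct_of_forall_sum_map_eq_zero (κ := Fin 3) hs
    (fun x ↦ ![((x.left / s : ℕ) : ZMod p), ((x.right / t : ℕ) : ZMod p),
      ((x.weight / s : ℕ) : ZMod p)]) fun B hB hsum ↦ ?_
  exact prod_toList_mem_level hr hB (mul_dvd_sum_map (fun x hx ↦ (hB x hx).1) (hsum 0))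
    (mul_dvd_sum_map (fun x hx ↦ (hB x hx).2.1) (hsum 1))
    (mul_dvd_sum_map (fun x hx ↦ (hB x hx).2.2) (hsum 2))

theorem hasLevelSubproduct_rank_two (hs : 0 < s) (hp : p.Prime) (hr : r ^ t ≡ 1 [MOD p]) :
    HasLevelSubproduct r s t (s * p) t (2 * (p - 1)) := by
  have : Fact p.Prime := ⟨hp⟩
  refine hasLevelSubproduct_of_forall_sum_map_eq_zero (κ := Fin 2) hs
    (fun x ↦ ![((x.left / s : ℕ) : ZMod p), ((x.weight / s : ℕ) : ZMod p)]) fun B hB hsum ↦ ?_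
  have hright : t ∣ (B.map right).sum := Multiset.dvd_sum fun b hb ↦ by
    obtain ⟨x, hx, rfl⟩ := Multiset.mem_map.1 hb
    exact (hB x hx).2.1
  have hlevel := prod_toList_mem_level (k := 1) hr hB
    (mul_dvd_sum_map (fun x hx ↦ (hB x hx).1) (hsum 0)) (by rwa [mul_one])
    (mul_dvd_sum_map (fun x hx ↦ (hB x hx).2.2) (hsum 1))
  rwa [mul_one] at hlevel

theorem hasLevelSubproduct_of_pow_modEq_one (hs : 0 < s) (hn : 0 < n) (hr : r ^ t ≡ 1 [MOD n]) :
    HasLevelSubproduct r s t (s * n) t (2 * n - 2) := by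
  induction n, hn using induction_on_minFac generalizing s with
  | one =>
    intro x hx hxw S _ _
    exact ⟨x, ⟨[x], by simp, by simp⟩, by rwa [mul_one], hxw⟩
  | minFac_mul p n hp hn _ ih =>
    have hrp : r ^ t ≡ 1 [MOD p] := hr.of_mul_right n
    have h := (hasLevelSubproduct_rank_two hs hp hrp).trans hs
      (hasNormalizedSubproduct_erdos_ginzburg_ziv hrp)
      (by have := hp.two_le; omega)
      (ih (Nat.mul_pos hs hp.pos) (hr.of_mul_left p))
    rw [sub_mul_add_mul_pred (by omega) hp.pos] at h
    simpa only [mul_assoc, mul_comm, mul_left_comm] using h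

theorem hasLevelSubproduct_mul (hs : 0 < s) (hn : 0 < n) (hm : 0 < m)
    (hr : r ^ (t * m) ≡ 1 [MOD m * n]) :
    HasLevelSubproduct r s t (s * (m * n)) (t * m) (2 * (m * n) + m - 3) := by
  induction m, hm using induction_on_minFac generalizing s t with
  | one =>
    simpa using hasLevelSubproduct_of_pow_modEq_one hs hn (by simpa using hr)
  | minFac_mul p m hp hm hpm ih =>
    have hrp := modEq_one_of_pow_modEq_one_minFac_mul hp hm hpm hr
    have hmn : 0 < m * n := Nat.mul_pos hm hn
    have h := (hasLevelSubproduct_rank_three hs hp hrp).trans hs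
      (hasNormalizedSubproduct_kemnitz hp hrp) (by have := hp.two_le; omega)
      (ih (Nat.mul_pos hs hp.pos) (by
        rw [mul_assoc t p m]
        exact (mul_assoc p m n ▸ hr).of_mul_left p))
    rw [sub_mul_add_mul_pred (by omega) hp.pos] at h
    simpa only [mul_add, mul_assoc, mul_comm, mul_left_comm] using h

theorem exists_mem_subproducts_weight_eq_mul (hs : 0 < s) (hn : 0 < n) (hm : 0 < m)
    (hr : r ^ (t * m) ≡ 1 [MOD m * n]) {S : Multiset (LiftMonoid r)}
    (hS : ∀ x ∈ S, Normalized s t x) (hcard : 2 * (m * n) + m - 2 ≤ S.card) :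
    ∃ z ∈ subproducts S, z ∈ level r (s * (m * n)) (t * m) ∧
      ∃ j, 0 < j ∧ j ≤ m ∧ z.weight = j * (s * (m * n)) := by
  have hmn : m ≤ m * n := Nat.le_mul_of_pos_right m hn
  obtain ⟨S', hS'S, hS'⟩ := exists_le_card_eq hcard
  have hS'n : ∀ y ∈ S', Normalized s t y := fun y hy ↦ hS y (Multiset.mem_of_le hS'S hy)
  obtain ⟨_, ⟨l, hlS', rfl⟩, hz, hz0⟩ : ∃ z ∈ subproducts S', z ∈ level r (s * (m * n)) (t * m) ∧
      0 < z.weight := by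
    obtain ⟨x, hx⟩ := Multiset.card_pos_iff_exists_mem.1 (by omega : 0 < S'.card)
    obtain ⟨S₀, rfl⟩ := Multiset.exists_cons_of_mem hx
    rw [Multiset.card_cons] at hS'
    exact hasLevelSubproduct_mul hs hn hm hr x (hS'n x hx).1 (hs.trans_eq (hS'n x hx).2.symm) S₀
      (fun y hy ↦ hS'n y (Multiset.mem_cons_of_mem hy)) (by omega)
  have hzw := weight_list_prod_eq fun x hx ↦ hS'n x (Multiset.mem_of_le hlS' hx)
  obtain ⟨j, hj⟩ : m * n ∣ l.length := Nat.dvd_of_mul_dvd_mul_left hs (by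
    rw [mul_comm s l.length, ← hzw]
    exact hz.2.2)
  have hj0 : 0 < j := Nat.pos_of_ne_zero fun h ↦ by simp [hzw, hj, h] at hz0
  have hjle : m * n * j ≤ 2 * (m * n) + m - 2 := hj ▸ (Multiset.card_le_card hlS').trans_eq hS'
  refine ⟨l.prod, ⟨l, hlS'.trans hS'S, rfl⟩, hz, j, hj0, ?_, by rw [hzw, hj]; ring⟩
  have hj3 : j < 3 := by
    by_contra! h
    have := Nat.mul_le_mul_left (m * n) h
    omega
  obtain rfl | hm2 : m = 1 ∨ 2 ≤ m := by omega
  · by_contra! h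
    have := Nat.mul_le_mul_left (1 * n) h
    omega
  · omega

theorem exists_mem_subproducts_mem_level (hs : 0 < s) (hn : 0 < n) (hm : 0 < m)
    (hr : r ^ (t * m) ≡ 1 [MOD m * n]) {S : Multiset (LiftMonoid r)}
    (hS : ∀ x ∈ S, Normalized s t x) (hcard : m ^ 2 * n + m * n + m - 2 ≤ S.card) :
    ∃ y ∈ subproducts S, y ∈ level r (s * (m * n)) (t * m) ∧ y.weight = m * (s * (m * n)) := by
  have hmn : m ≤ m * n := Nat.le_mul_of_pos_right m hn
  have hcount : (m - 1) * (m * n) + (2 * (m * n) + m - 2) ≤ S.card := by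
    have : (m - 1) * (m * n) + m * n = m ^ 2 * n := by
      rw [← Nat.succ_mul, Nat.succ_eq_add_one, Nat.sub_add_cancel hm, sq, mul_assoc]
    omega
  obtain ⟨U, S', hS'S, hUk, hU, hS'card, hUS⟩ :=
    (hasNormalizedSubproduct_mul hs hn hm hr).exists_condenses hs (by omega) (m - 1) hS hcount
  obtain ⟨z, hzS', hz, j, hj0, hjm, hzw⟩ := exists_mem_subproducts_weight_eq_mul hs hn hm hr
    (fun x hx ↦ hS x (Multiset.mem_of_le hS'S hx)) hS'card
  obtain ⟨U', hU'U, hU'card⟩ := exists_le_card_eq (by omega : m - j ≤ U.card)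
  have hU' : ∀ y ∈ U', Normalized (s * (m * n)) (t * m) y :=
    fun y hy ↦ hU y (Multiset.mem_of_le hU'U hy)
  have hzU : Condenses ({z} + U) S := by
    have h := (Condenses.singleton hzS').add_right U
    rw [add_comm S'] at h
    exact h.trans hUS
  refine ⟨(z ::ₘ U').toList.prod, hzU.subproducts_subset (prod_toList_mem_subproducts
    ((Multiset.cons_le_cons z hU'U).trans_eq (Multiset.singleton_add z U).symm)),
    Submonoid.list_prod_mem _ ?_, ?_⟩
  · simpa using ⟨hz, fun y hy ↦ (hU' y hy).1⟩
  · rw [weight_list_prod, Multiset.sum_map_toList, Multiset.map_cons, Multiset.sum_cons, hzw,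
      sum_weight_eq hU', hU'card, ← add_mul, Nat.add_sub_cancel' hjm]

end LiftMonoid

section Group

variable {G : Type*} [Group G] {α β : G} {r m n : ℕ}

theorem semiconjBy_pow_pow (h : SemiconjBy β α (α ^ r)) (i j : ℕ) :
    SemiconjBy (β ^ j) (α ^ i) (α ^ (r ^ j * i)) := by
  induction j with
  | zero => simp
  | succ j ih =>
    rw [pow_succ', pow_succ', mul_assoc, pow_mul]
    exact SemiconjBy.mul_left (h.pow_right _) ih

theorem pow_modEq_one_of_semiconjBy (h : SemiconjBy β α (α ^ r)) (hβ : β ^ m = 1) :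
    r ^ m ≡ 1 [MOD orderOf α] := by
  have hα := semiconjBy_pow_pow h 1 m
  rw [hβ, mul_one, SemiconjBy, one_mul, mul_one] at hα
  exact (pow_eq_pow_iff_modEq.1 hα).symm

/-- Evaluation of the exponents at elements `α`, `β` of a group, forgetting the weight. -/
def LiftMonoid.eval (h : SemiconjBy β α (α ^ r)) : LiftMonoid r →* G where
  toFun x := α ^ x.left * β ^ x.right
  map_one' := by simp
  map_mul' x y := by
    simp only [LiftMonoid.left_mul, LiftMonoid.right_mul, pow_add, mul_assoc]
    rw [← mul_assoc (β ^ x.right), (semiconjBy_pow_pow h y.left x.right).eq, mul_assoc]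

theorem LiftMonoid.eval_eq_one (h : SemiconjBy β α (α ^ r)) (hα : orderOf α = m * n)
    (hβ : β ^ m = 1) {x : LiftMonoid r} (hx : x ∈ level r (m * n) m) : eval h x = 1 := by
  change α ^ x.left * β ^ x.right = 1
  rw [orderOf_dvd_iff_pow_eq_one.1 (hα ▸ hx.1), one_mul,
    orderOf_dvd_iff_pow_eq_one.1 ((orderOf_dvd_of_pow_eq_one hβ).trans hx.2.1)]

theorem exists_le_card_eq_isProductOne (hm : 0 < m) (hn : 0 < n) (h : SemiconjBy β α (α ^ r))
    (hα : orderOf α = m * n) (hβ : β ^ m = 1) (hgen : ∀ g : G, ∃ i j : ℕ, α ^ i * β ^ j = g)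
    {S : Multiset G} (hS : m ^ 2 * n + m * n + m - 2 ≤ S.card) :
    ∃ T ≤ S, T.card = m ^ 2 * n ∧ IsProductOne T := by
  choose left right hlr using hgen
  let lift (g : G) : LiftMonoid r := ⟨left g, right g, 1⟩
  have hlift : ∀ x ∈ S.map lift, x.Normalized 1 1 := by
    intro x hx
    obtain ⟨g, -, rfl⟩ := Multiset.mem_map.1 hx
    exact ⟨⟨one_dvd _, one_dvd _, one_dvd _⟩, rfl⟩
  have hr : r ^ (1 * m) ≡ 1 [MOD m * n] := by
    rw [one_mul, ← hα]
    exact pow_modEq_one_of_semiconjBy h hβ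
  obtain ⟨_, ⟨l, hlS, rfl⟩, hlevel, hweight⟩ := LiftMonoid.exists_mem_subproducts_mem_level
    one_pos hn hm hr hlift (by rwa [Multiset.card_map])
  rw [LiftMonoid.weight_list_prod_eq fun x hx ↦ hlift x (Multiset.mem_of_le hlS hx), mul_one,
    one_mul] at hweight
  rw [one_mul, one_mul] at hlevel
  have hmap : (S.map lift).map (LiftMonoid.eval h) = S := by
    rw [Multiset.map_map]
    exact (Multiset.map_congr rfl fun g _ ↦ hlr g).trans (Multiset.map_id S)
  refine ⟨(l : Multiset (LiftMonoid r)).map (LiftMonoid.eval h),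
    (Multiset.map_le_map hlS).trans_eq hmap, ?_, l.map (LiftMonoid.eval h), rfl, ?_⟩
  · rw [Multiset.card_map, Multiset.coe_card, hweight, sq, mul_assoc]
  · rw [← map_list_prod, LiftMonoid.eval_eq_one h hα hβ hlevel]

end Group

section ProductOne

variable {G H : Type*} [Group G] [Group H] {S T : Multiset G}

theorem IsProductOne.map (hS : IsProductOne S) (f : G →* H) : IsProductOne (S.map f) := by
  obtain ⟨l, rfl, hl⟩ := hS
  exact ⟨l.map f, rfl, by rw [← map_list_prod, hl, map_one]⟩

theorem isProductOne_of_cons_one (h : IsProductOne (1 ::ₘ S)) : IsProductOne S := by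
  obtain ⟨l, hl, hprod⟩ := h
  obtain ⟨l₁, l₂, rfl⟩ := List.append_of_mem
    (Multiset.mem_coe.1 (hl ▸ Multiset.mem_cons_self (1 : G) S))
  refine ⟨l₁ ++ l₂, ?_, by simpa using hprod⟩
  rw [← Multiset.cons_inj_right 1, ← hl, ← Multiset.coe_add, ← Multiset.coe_add,
    ← Multiset.cons_coe, Multiset.add_cons]

theorem isProductOne_of_add_replicate_one {k : ℕ}
    (h : IsProductOne (S + Multiset.replicate k 1)) : IsProductOne S := by
  induction k with
  | zero => simpa using h
  | succ k ih =>
    rw [Multiset.replicate_succ, Multiset.add_cons] at h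
    exact ih (isProductOne_of_cons_one h)

theorem exists_add_eq_of_le_add {α : Type*} {S T U : Multiset α} (h : T ≤ S + U) :
    ∃ T₁ ≤ S, ∃ T₂ ≤ U, T₁ + T₂ = T := by
  classical
  exact ⟨T ∩ S, Multiset.inter_le_right, T - S, Multiset.sub_le_iff_le_add'.2 h, by
    rw [add_comm, Multiset.sub_add_inter]⟩

theorem productOneFree_replicate (g : G) :
    ProductOneFree (Multiset.replicate (orderOf g - 1) g) := by
  rintro T hT hT0 ⟨l, rfl, hl⟩
  obtain ⟨i, hi, h⟩ := Multiset.le_replicate_iff.1 hT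
  rw [← Multiset.coe_replicate, Multiset.coe_eq_coe, List.perm_replicate] at h
  rw [h, List.prod_replicate, ← orderOf_dvd_iff_pow_eq_one] at hl
  rcases Nat.eq_zero_or_pos i with rfl | hi0
  · exact hT0 (by simp [h])
  · have := Nat.le_of_dvd hi0 hl
    omega

theorem ProductOneFree.add {S₁ S₂ : Multiset G} (h₁ : ProductOneFree S₁) (f : G →* H)
    (hf : ∀ g ∈ S₁, f g = 1) (h₂ : ProductOneFree (S₂.map f)) : ProductOneFree (S₁ + S₂) := by
  intro T hT hT0 hTprod
  obtain ⟨T₁, hT₁, T₂, hT₂, rfl⟩ := exists_add_eq_of_le_add hT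
  have hT₁f : T₁.map f = Multiset.replicate T₁.card 1 := by
    rw [← Multiset.map_const']
    exact Multiset.map_congr rfl fun g hg ↦ hf g (Multiset.mem_of_le hT₁ hg)
  have hT₂f : IsProductOne (T₂.map f) := isProductOne_of_add_replicate_one (k := T₁.card) (by
    rw [← hT₁f, add_comm, ← Multiset.map_add]
    exact hTprod.map f)
  obtain rfl : T₂ = 0 := by
    by_contra hT₂0
    exact h₂ _ (Multiset.map_le_map hT₂) (by simpa using hT₂0) hT₂f
  rw [add_zero] at hT0 hTprod
  exact h₁ T₁ hT₁ hT0 hTprod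

theorem ProductOneFree.card_le_of_isProductOne (hS : ProductOneFree S) {N : ℕ}
    (hT : T ≤ S + Multiset.replicate N 1) (hTprod : IsProductOne T) : T.card ≤ N := by
  obtain ⟨T₁, hT₁, T₂, hT₂, rfl⟩ := exists_add_eq_of_le_add hT
  obtain ⟨i, hi, rfl⟩ := Multiset.le_replicate_iff.1 hT₂
  obtain rfl : T₁ = 0 := by
    by_contra hT₁0
    exact hS T₁ hT₁ hT₁0 (isProductOne_of_add_replicate_one hTprod)
  simpa using hi

theorem productOneFree_replicate_inl_add_replicate_inr (φ : H →* MulAut G) (g : G) (h : H) :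
    ProductOneFree (Multiset.replicate (orderOf g - 1) (SemidirectProduct.inl g : G ⋊[φ] H) +
      Multiset.replicate (orderOf h - 1) (SemidirectProduct.inr h)) := by
  rw [← orderOf_injective (SemidirectProduct.inl (φ := φ)) SemidirectProduct.inl_injective g]
  refine (productOneFree_replicate _).add SemidirectProduct.rightHom (fun x hx ↦ ?_) ?_
  · rw [Multiset.eq_of_mem_replicate hx, SemidirectProduct.rightHom_inl]
  · rw [Multiset.map_replicate, SemidirectProduct.rightHom_inr]
    exact productOneFree_replicate h

end ProductOne

section SemidirectProduct

open Multiplicative SemidirectProduct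

variable {m n : ℕ}

theorem orderOf_ofAdd_one (n : ℕ) : orderOf (ofAdd (1 : ZMod n)) = n := by
  rw [orderOf_ofAdd_eq_addOrderOf, ZMod.addOrderOf_one]

theorem exists_semiconjBy_inr_inl [NeZero n]
    (φ : Multiplicative (ZMod m) →* MulAut (Multiplicative (ZMod n))) : ∃ r : ℕ, SemiconjBy
    (inr (ofAdd 1) : Multiplicative (ZMod n) ⋊[φ] Multiplicative (ZMod m)) (inl (ofAdd 1))
      (inl (ofAdd 1) ^ r) := by
  refine ⟨(toAdd (φ (ofAdd 1) (ofAdd 1))).val, ?_⟩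
  have hpow : (ofAdd 1 : Multiplicative (ZMod n)) ^ (toAdd (φ (ofAdd 1) (ofAdd 1))).val =
      φ (ofAdd 1) (ofAdd 1) := by
    rw [← ofAdd_nsmul, nsmul_one, ZMod.natCast_zmod_val, ofAdd_toAdd]
  rw [← map_pow, hpow, inl_aut, map_inv]
  exact (inv_mul_cancel_right _ _).symm

theorem exists_inl_pow_mul_inr_pow_eq [NeZero m] [NeZero n]
    {φ : Multiplicative (ZMod m) →* MulAut (Multiplicative (ZMod n))}
    (g : Multiplicative (ZMod n) ⋊[φ] Multiplicative (ZMod m)) :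
    ∃ i j : ℕ, inl (ofAdd 1) ^ i * inr (ofAdd 1) ^ j = g := by
  refine ⟨(toAdd g.left).val, (toAdd g.right).val, ?_⟩
  simp [← map_pow, ← ofAdd_nsmul, inl_left_mul_inr_right]

theorem exists_le_card_eq_isProductOne_semidirect (hm : 0 < m) (hn : 0 < n)
    {φ : Multiplicative (ZMod m) →* MulAut (Multiplicative (ZMod (m * n)))}
    {S : Multiset (Multiplicative (ZMod (m * n)) ⋊[φ] Multiplicative (ZMod m))}
    (hS : m ^ 2 * n + m * n + m - 2 ≤ S.card) :
    ∃ T ≤ S, T.card = m ^ 2 * n ∧ IsProductOne T := by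
  have : NeZero m := ⟨hm.ne'⟩
  have : NeZero (m * n) := ⟨(Nat.mul_pos hm hn).ne'⟩
  obtain ⟨r, hr⟩ := exists_semiconjBy_inr_inl φ
  refine exists_le_card_eq_isProductOne hm hn hr ?_ ?_ exists_inl_pow_mul_inr_pow_eq hS
  · rw [orderOf_injective inl inl_injective, orderOf_ofAdd_one]
  · rw [← map_pow, orderOf_dvd_iff_pow_eq_one.1 (orderOf_ofAdd_one m).dvd, map_one]

end SemidirectProduct

/-- For `G ≅ C_m ⋉_φ C_{mn}` (of order `m²n`),
`E(G) = |G| + d(G) = m²n + mn + m − 2`, and consequently `d(G) = mn + m − 2`. -/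
theorem EGZ_for_semidirect (m n : ℕ) (hm : 0 < m) (hn : 0 < n)
    (φ : Multiplicative (ZMod m) →* MulAut (Multiplicative (ZMod (m * n))))
    (d E : ℕ)
    (hd : IsGreatest {k : ℕ |
      ∃ S : Multiset (Multiplicative (ZMod (m * n)) ⋊[φ] Multiplicative (ZMod m)),
        Multiset.card S = k ∧ ProductOneFree S} d)
    (hE : IsLeast {l : ℕ |
      ∀ S : Multiset (Multiplicative (ZMod (m * n)) ⋊[φ] Multiplicative (ZMod m)),
        l ≤ Multiset.card S →
        ∃ T ≤ S, Multiset.card T = m ^ 2 * n ∧ IsProductOne T} E) :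
    E = m ^ 2 * n + d ∧ E = m ^ 2 * n + m * n + m - 2 ∧ d = m * n + m - 2 := by
  have hmn : 0 < m * n := Nat.mul_pos hm hn
  have hpos : 0 < m ^ 2 * n := Nat.mul_pos (pow_pos hm 2) hn
  have hd_ge : m * n + m - 2 ≤ d := by
    refine hd.2 ⟨_, ?_, productOneFree_replicate_inl_add_replicate_inr φ (Multiplicative.ofAdd 1)
      (Multiplicative.ofAdd 1)⟩
    rw [orderOf_ofAdd_one, orderOf_ofAdd_one, Multiset.card_add, Multiset.card_replicate,
      Multiset.card_replicate]
    omega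
  have hE_le : E ≤ m ^ 2 * n + m * n + m - 2 :=
    hE.2 fun S hS ↦ exists_le_card_eq_isProductOne_semidirect hm hn hS
  have hE_ge : m ^ 2 * n + d ≤ E := by
    obtain ⟨S, rfl, hS⟩ := hd.1
    by_contra! hlt
    obtain ⟨T, hT, hTcard, hTprod⟩ := hE.1 (S + Multiset.replicate (m ^ 2 * n - 1) 1) (by
      rw [Multiset.card_add, Multiset.card_replicate]
      omega)
    have := hS.card_le_of_isProductOne hT hTprod
    omega
  omega
end

section
/- For any positive integers m and k and any module V of the group C_m ⋉_φ C_m over a field F whose characteristic does not divide m², the generalized Noether number satisfies β_k(C_m ⋉_φ C_m, V) ≤ km + m − 1. -/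
open MvPolynomial

/-- The action of a group element on polynomial functions, induced by a linear
representation `ρ` on the variables. -/
noncomputable def polyAct {F : Type*} [Field F] {G : Type*} [Group G] {d : ℕ}
    (ρ : G →* Matrix.GeneralLinearGroup (Fin d) F) (g : G)
    (f : MvPolynomial (Fin d) F) : MvPolynomial (Fin d) F :=
  MvPolynomial.aeval (fun i => ∑ j, ((ρ g).val i j) • (MvPolynomial.X j)) f

/-- A polynomial invariant of the representation `ρ`. -/
def IsPolyInvariant {F : Type*} [Field F] {G : Type*} [Group G] {d : ℕ}
    (ρ : G →* Matrix.GeneralLinearGroup (Fin d) F)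
    (f : MvPolynomial (Fin d) F) : Prop :=
  ∀ g : G, polyAct ρ g f = f

/-- `β_k(G, V) ≤ s`: every invariant with zero constant term lies in the span of
invariants of degree `≤ s` together with products of at least `k + 1` invariants
with zero constant term (i.e. the ideal power `((F[V]^G)_+)^{k+1}`). -/
def BetaKBoundLe {F : Type*} [Field F] {G : Type*} [Group G] {d : ℕ}
    (ρ : G →* Matrix.GeneralLinearGroup (Fin d) F) (k s : ℕ) : Prop :=
  ∀ f : MvPolynomial (Fin d) F, IsPolyInvariant ρ f → MvPolynomial.constantCoeff f = 0 →
    f ∈ Submodule.span F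
      ({h : MvPolynomial (Fin d) F |
          IsPolyInvariant ρ h ∧ MvPolynomial.constantCoeff h = 0 ∧ h.totalDegree ≤ s} ∪
       {h : MvPolynomial (Fin d) F | ∃ l : List (MvPolynomial (Fin d) F),
          k + 1 ≤ l.length ∧
          (∀ x ∈ l, IsPolyInvariant ρ x ∧ MvPolynomial.constantCoeff x = 0) ∧
          l.prod = h})

/-! For a divisor `n` of `m` let `N n = (C_m)ⁿ ⋊ (C_m)ⁿ`. Multiplying `n` successively by the prime
factors of `m` in increasing order, one obtains a chain of normal subgroups of `C_m ⋊ C_m` with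
quotients `C_p × C_p`: an automorphism `x ↦ x ^ v` in the image of `φ` has order dividing `m`,
while the order of `v` modulo a prime `p` divides `p - 1`, which is prime to all factors of `m`
whose prime divisors are at least `p`.

For a quotient `C_p × C_p`, adjoin the `p`-th roots of unity to the field and write an invariant in
the `(s * p)`-th power of a stable space `I` as a combination of products of `s * p` weight vectors.
Averaging removes the products whose weights do not sum to zero, and a zero-sum sequence of length
`s * p` over `C_p × C_p` splits into `s` zero-sum pieces, so the remaining products lie in the
`s`-th power of the invariants of `I`. Such bounds multiply along the chain, and for `I = F[V]₊` and
`s = k + 1` the product bound says `β_k ≤ (k + 1) * m - 1`. -/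

section ZeroSum

variable {ι κ : Type*} [Fintype κ] {p : ℕ} [Fact p.Prime] {S : Finset ι}

/- By Chevalley–Warning the system `∑ i, e i j * x i ^ (p - 1) = 0` has a nonzero solution; its
support is the required set. -/
theorem exists_nonempty_sum_eq_zero_s16 (e : ι → κ → ZMod p)
    (hS : Fintype.card κ * (p - 1) < S.card) :
    ∃ T ⊆ S, T.Nonempty ∧ ∑ i ∈ T, e i = 0 := by
  classical
  have hp : p.Prime := Fact.out
  let f : κ → MvPolynomial S (ZMod p) := fun j ↦ ∑ i : S, C (e i j) * X i ^ (p - 1)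
  have eval_f (x : S → ZMod p) (j : κ) : eval x (f j) = ∑ i with x i ≠ 0, e i j := by
    simp only [f, map_sum, map_mul, map_pow, eval_C, eval_X, ZMod.pow_card_sub_one, mul_ite,
      mul_one, mul_zero, Finset.sum_filter]
  have hdeg : ∑ j, (f j).totalDegree < Fintype.card S := by
    calc ∑ j, (f j).totalDegree ≤ ∑ _j : κ, (p - 1) :=
          Finset.sum_le_sum fun j _ ↦ totalDegree_finsetSum_le fun i _ ↦ by
            grw [totalDegree_mul, totalDegree_C, totalDegree_X_pow, zero_add]
      _ < Fintype.card S := by simpa using hS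
  let zeroSol : {x : S → ZMod p // ∀ j, eval x (f j) = 0} := ⟨0, fun j ↦ by rw [eval_f]; simp⟩
  have hcard : 1 < Fintype.card {x : S → ZMod p // ∀ j, eval x (f j) = 0} :=
    hp.one_lt.trans_le <| Nat.le_of_dvd (Fintype.card_pos_iff.2 ⟨zeroSol⟩)
      (char_dvd_card_solutions_of_fintype_sum_lt p hdeg)
  obtain ⟨⟨x, hx⟩, hne⟩ := Fintype.exists_ne_of_one_lt_card hcard zeroSol
  refine ⟨({i | x i ≠ 0} : Finset S).map (.subtype _), ?_, ?_, ?_⟩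
  · exact Finset.map_subtype_subset _
  · obtain ⟨i, hi⟩ := Function.ne_iff.1 (Subtype.coe_ne_coe.2 hne)
    exact (Finset.Nonempty.map ⟨i, by simpa [zeroSol] using hi⟩)
  · ext j
    simpa [eval_f] using hx j

theorem exists_nonempty_sum_eq_zero_card_le_two_mul_sub_one (e : ι → Fin 2 → ZMod p)
    (hS : 2 * p - 1 ≤ S.card) :
    ∃ T ⊆ S, T.Nonempty ∧ T.card ≤ 2 * p - 1 ∧ ∑ i ∈ T, e i = 0 := by
  have hp : 0 < p := (Fact.out : p.Prime).pos
  obtain ⟨S', hS', hcard⟩ := Finset.exists_subset_card_eq hS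
  obtain ⟨T, hT, hne, hsum⟩ := exists_nonempty_sum_eq_zero_s16 (S := S') e (by simp; omega)
  exact ⟨T, hT.trans hS', hne, hcard ▸ Finset.card_le_card hT, hsum⟩

/- Adjoining a third coordinate `1` to `e` yields a zero-sum subset of cardinality `p` or `2 * p`;
in the second case either a proper zero-sum subset or its complement has at most `p` elements. -/
theorem exists_nonempty_sum_eq_zero_card_le (e : ι → Fin 2 → ZMod p)
    (hS : 3 * p - 2 ≤ S.card) :
    ∃ T ⊆ S, T.Nonempty ∧ T.card ≤ p ∧ ∑ i ∈ T, e i = 0 := by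
  classical
  have hp : 0 < p := (Fact.out : p.Prime).pos
  obtain ⟨S', hS', hcard⟩ := Finset.exists_subset_card_eq hS
  obtain ⟨U, hU, hUne, hUsum⟩ :=
    exists_nonempty_sum_eq_zero_s16 (S := S') (fun i ↦ (Fin.cons 1 (e i) : Fin 3 → ZMod p))
      (by simp; omega)
  have hU_sum : ∑ i ∈ U, e i = 0 := by
    ext j
    simpa using congrFun hUsum j.succ
  have hdvd : p ∣ U.card := by
    rw [← ZMod.natCast_eq_zero_iff]
    simpa using congrFun hUsum 0
  obtain hUp | hUp := le_or_gt U.card p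
  · exact ⟨U, hU.trans hS', hUne, hUp, hU_sum⟩
  have hU_card : U.card = 2 * p := by
    obtain ⟨c, hc⟩ := hdvd
    have hU_le := Finset.card_le_card hU
    have hc_lt : c < 3 := lt_of_mul_lt_mul_left (a := p) (by omega) p.zero_le
    have hc_gt : 1 < c := lt_of_mul_lt_mul_left (a := p) (by omega) p.zero_le
    rw [hc, mul_comm, show c = 2 by omega]
  obtain ⟨T, hT, hTne, hT_card, hT_sum⟩ :=
    exists_nonempty_sum_eq_zero_card_le_two_mul_sub_one (S := U) e (by omega)
  have hcard_sdiff := Finset.card_sdiff_add_card_eq_card hT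
  obtain hTp | hTp := le_or_gt T.card p
  · exact ⟨T, hT.trans (hU.trans hS'), hTne, hTp, hT_sum⟩
  · refine ⟨U \ T, Finset.sdiff_subset.trans (hU.trans hS'), Finset.card_pos.1 ?_, ?_, ?_⟩
    · omega
    · omega
    · rw [Finset.sum_sdiff_eq_sub hT, hU_sum, hT_sum, sub_zero]

theorem exists_finpartition_insert {M : Type*} [AddCommGroup M] {e : ι → M} {T : Finset ι}
    [DecidableEq ι] (hT : T ⊆ S) (hTne : T.Nonempty) (hT_sum : ∑ i ∈ T, e i = 0)
    (π : Finpartition (S \ T)) (hπ : ∀ U ∈ π.parts, ∑ i ∈ U, e i = 0) :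
    ∃ π' : Finpartition S, π'.parts.card = π.parts.card + 1 ∧
      ∀ U ∈ π'.parts, ∑ i ∈ U, e i = 0 := by
  refine ⟨π.extend hTne.ne_empty Finset.sdiff_disjoint (Finset.sdiff_union_of_subset hT),
    Finpartition.card_extend .., ?_⟩
  rw [Finpartition.extend_parts, Finset.forall_mem_insert]
  exact ⟨hT_sum, hπ⟩

/- This is `D_k(C_p × C_p) ≤ k * p + p - 1` for the generalized Davenport constant `D_k`. -/
theorem exists_finpartition_sum_eq_zero [DecidableEq ι] (e : ι → Fin 2 → ZMod p) (k : ℕ)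
    (hS_sum : ∑ i ∈ S, e i = 0) (hS : (k + 1) * p ≤ S.card) :
    ∃ π : Finpartition S, π.parts.card = k + 1 ∧ ∀ T ∈ π.parts, ∑ i ∈ T, e i = 0 := by
  have hp : 0 < p := (Fact.out : p.Prime).pos
  have sum_sdiff {S T : Finset ι} (hT : T ⊆ S) (hS_sum : ∑ i ∈ S, e i = 0)
      (hT_sum : ∑ i ∈ T, e i = 0) : ∑ i ∈ S \ T, e i = 0 := by
    rw [Finset.sum_sdiff_eq_sub hT, hS_sum, hT_sum, sub_zero]
  induction k using Nat.twoStepInduction generalizing S with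
  | zero =>
    have hne : S.Nonempty := Finset.card_pos.1 (by omega)
    exact ⟨.indiscrete hne.ne_empty, by simp, by simpa using hS_sum⟩
  | one =>
    obtain ⟨T, hT, hTne, hT_card, hT_sum⟩ :=
      exists_nonempty_sum_eq_zero_card_le_two_mul_sub_one (S := S) e (by omega)
    have hne : (S \ T).Nonempty := Finset.card_pos.1 <| by
      have := Finset.card_sdiff_add_card_eq_card hT
      omega
    exact exists_finpartition_insert hT hTne hT_sum (.indiscrete hne.ne_empty)
      (by simpa using sum_sdiff hT hS_sum hT_sum)
  | more k _ ih =>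
    have hcard : (k + 1 + 1) * p + p ≤ S.card := by linarith
    obtain ⟨T, hT, hTne, hT_card, hT_sum⟩ :=
      exists_nonempty_sum_eq_zero_card_le (S := S) e <| by
        have := Nat.mul_le_mul_right p (show 3 ≤ k + 2 + 1 by omega)
        omega
    obtain ⟨π, hπ_card, hπ⟩ := ih (sum_sdiff hT hS_sum hT_sum) <| by
      have := Finset.card_sdiff_add_card_eq_card hT
      omega
    rw [← hπ_card]
    exact exists_finpartition_insert hT hTne hT_sum π hπ

end ZeroSum

section CharProj

variable {K V : Type*} [Field K] [AddCommGroup V] [Module K V] {p : ℕ} [NeZero p]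
  (ψ : AddChar (ZMod p) K) {A B : Module.End K V}

/-- The projection onto the `ψ e`-eigenspace of an endomorphism `A` with `A ^ p = 1`, up to the
factor `p`; for `e = 0` it is the transfer onto the fixed vectors of `A`. -/
def charProj (A : Module.End K V) (e : ZMod p) : Module.End K V :=
  ∑ l : ZMod p, ψ (-(e * l)) • A ^ l.val

theorem mul_charProj (hA : A ^ p = 1) (e : ZMod p) : A * charProj ψ A e = ψ e • charProj ψ A e := by
  have hpow (l : ZMod p) : A ^ (l + 1).val = A * A ^ l.val := by
    rw [← pow_succ', pow_eq_pow_mod (l.val + 1) hA, ← ZMod.val_natCast]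
    simp
  rw [charProj, Finset.mul_sum, Finset.smul_sum,
    ← Equiv.sum_comp (Equiv.addRight (1 : ZMod p)) fun l ↦ ψ e • ψ (-(e * l)) • A ^ l.val]
  refine Finset.sum_congr rfl fun l _ ↦ ?_
  rw [Equiv.coe_addRight, hpow, mul_smul_comm, smul_smul, ← AddChar.map_add_eq_mul]
  congr 2
  ring

theorem commute_charProj (h : Commute A B) (e : ZMod p) : Commute A (charProj ψ B e) :=
  .sum_right _ _ _ fun l _ ↦ (h.pow_right l.val).smul_right _

variable {ψ}

theorem charProj_zero_apply (hψ : ψ.IsPrimitive) {e : ZMod p} {x : V}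
    (hx : A x = ψ e • x) : charProj ψ A 0 x = if e = 0 then (p : K) • x else 0 := by
  have hpow (n : ℕ) : (A ^ n) x = ψ (n * e) • x := by
    induction n with
    | zero => simp
    | succ n ih =>
      rw [pow_succ, Module.End.mul_apply, hx, map_smul, ih, smul_smul, ← AddChar.map_add_eq_mul]
      congr 2
      push_cast; ring
  simp [charProj, hpow, ← Finset.sum_smul, AddChar.sum_mulShift e hψ]

theorem charProj_zero_mul_apply (hψ : ψ.IsPrimitive) {e : Fin 2 → ZMod p} {x : V}
    (hA : A x = ψ (e 0) • x) (hB : B x = ψ (e 1) • x) :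
    (charProj ψ A 0 * charProj ψ B 0) x = if e = 0 then ((p : K) * p) • x else 0 := by
  have he : e = 0 ↔ e 1 = 0 ∧ e 0 = 0 := by simp [funext_iff, Fin.forall_fin_two, and_comm]
  rw [Module.End.mul_apply, charProj_zero_apply hψ hB, apply_ite (charProj ψ A 0), map_smul,
    charProj_zero_apply hψ hA, map_zero, smul_ite, smul_zero, smul_smul, ← ite_and]
  simp only [he]

theorem sum_charProj (hψ : ψ.IsPrimitive) (A : Module.End K V) :
    ∑ e, charProj ψ A e = (p : K) • 1 := by
  calc ∑ e, charProj ψ A e = ∑ l : ZMod p, (∑ e, ψ (e * -l)) • A ^ l.val := by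
        simp only [charProj, ← mul_neg, Finset.sum_smul]
        exact Finset.sum_comm
    _ = (p : K) • 1 := by
        simp [AddChar.sum_mulShift _ hψ, -mul_neg]

theorem span_eigenvectors_eq_top (hψ : ψ.IsPrimitive) (hp : (p : K) ≠ 0) (hA : A ^ p = 1)
    (hB : B ^ p = 1) (hAB : Commute A B) :
    Submodule.span K {x | ∃ e : Fin 2 → ZMod p, A x = ψ (e 0) • x ∧ B x = ψ (e 1) • x} = ⊤ := by
  refine Submodule.eq_top_iff'.2 fun x ↦ ?_
  have hx : ((p : K) * p) • x = ∑ e₀, ∑ e₁, (charProj ψ A e₀ * charProj ψ B e₁) x := by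
    simp_rw [← LinearMap.sum_apply, ← Finset.mul_sum, ← Finset.sum_mul, sum_charProj hψ]
    simp [smul_smul]
  rw [← Submodule.smul_mem_iff _ (mul_ne_zero hp hp), hx]
  refine Submodule.sum_mem _ fun e₀ _ ↦ Submodule.sum_mem _ fun e₁ _ ↦
    Submodule.subset_span ⟨![e₀, e₁], ?_, ?_⟩
  · rw [← Module.End.mul_apply, ← mul_assoc, mul_charProj ψ hA]
    rfl
  · have hcomm : Commute B (charProj ψ A e₀) := commute_charProj ψ hAB.symm e₀
    rw [← Module.End.mul_apply, ← mul_assoc, hcomm.eq, mul_assoc, mul_charProj ψ hB,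
      mul_smul_comm]
    rfl

end CharProj

section PowerBound

variable {F P G : Type*} [CommRing F] [CommRing P] [Algebra F P] [Group G]
  {σ : G →* (P →ₐ[F] P)} {N M H : Subgroup G} {I : Submodule F P}

/-- The `H`-invariant elements of a subspace `I` of an algebra on which `G` acts by `σ`. -/
def invariantsIn (σ : G →* (P →ₐ[F] P)) (H : Subgroup G) (I : Submodule F P) : Submodule F P where
  carrier := {x | x ∈ I ∧ ∀ h ∈ H, σ h x = x}
  zero_mem' := ⟨I.zero_mem, fun _ _ ↦ map_zero _⟩
  add_mem' hx hy := ⟨I.add_mem hx.1 hy.1, fun h hh ↦ by rw [map_add, hx.2 h hh, hy.2 h hh]⟩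
  smul_mem' c _ hx := ⟨I.smul_mem c hx.1, fun h hh ↦ by rw [map_smul, hx.2 h hh]⟩

theorem invariantsIn_mul_self_le (hI : I * I ≤ I) :
    invariantsIn σ H I * invariantsIn σ H I ≤ invariantsIn σ H I :=
  Submodule.mul_le.2 fun _ hx _ hy ↦ ⟨hI (Submodule.mul_mem_mul hx.1 hy.1),
    fun h hh ↦ by rw [map_mul, hx.2 h hh, hy.2 h hh]⟩

/-- The group `H / N` acting on a nonunital subalgebra `I` (encoded as an action of `H` on `I`
that is trivial on `N`) satisfies: every invariant in `I ^ (s * n)` lies in the `s`-th power of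
the space of invariants. For the augmentation ideal `I` of `F[V]` and `s = k + 1` this gives
`β_k(H / N, V) ≤ (k + 1) * n - 1`. -/
def IsPowerBound (σ : G →* (P →ₐ[F] P)) (N H : Subgroup G) (n : ℕ) : Prop :=
  ∀ I : Submodule F P, I * I ≤ I → (∀ h ∈ H, ∀ x ∈ I, σ h x ∈ I) →
    (∀ h ∈ N, ∀ x ∈ I, σ h x = x) →
      ∀ s ≠ 0, invariantsIn σ H (I ^ (s * n)) ≤ invariantsIn σ H I ^ s

theorem isPowerBound_self_one (σ : G →* (P →ₐ[F] P)) (H : Subgroup G) : IsPowerBound σ H H 1 := by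
  intro I _ _ hfix s _
  have hI : I ≤ invariantsIn σ H I := fun x hx ↦ ⟨hx, fun h hh ↦ hfix h hh x hx⟩
  rw [mul_one]
  exact fun x hx ↦ pow_le_pow_left' hI s hx.1

/- The reduction `β_k(G, V) ≤ β_{β_k(G/H)}(H, V)` along a normal subgroup: an invariant of `H`
in a high power of `I` is first expressed through `M`-invariants, which `H / M` permutes. -/
theorem IsPowerBound.trans [M.Normal] {n₁ n₂ : ℕ} (h₁ : IsPowerBound σ N M n₁)
    (h₂ : IsPowerBound σ M H n₂) (hMH : M ≤ H) (hn₂ : n₂ ≠ 0) :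
    IsPowerBound σ N H (n₁ * n₂) := by
  intro I hI hstable hfix s hs f hf
  have hstable' : ∀ h ∈ H, ∀ x ∈ invariantsIn σ M I, σ h x ∈ invariantsIn σ M I := by
    intro h hh x hx
    refine ⟨hstable h hh x hx.1, fun g hg ↦ ?_⟩
    calc σ g (σ h x) = σ h (σ (h⁻¹ * g * h) x) := by
          simp only [← AlgHom.mul_apply, ← map_mul]
          congr 2
          group
      _ = σ h x := by rw [hx.2 _ (Subgroup.Normal.conj_mem' ‹_› g hg h)]
  have hf_mem : f ∈ invariantsIn σ M I ^ (s * n₂) := by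
    refine h₁ I hI (fun h hh ↦ hstable h (hMH hh)) hfix _ (mul_ne_zero hs hn₂) ⟨?_, ?_⟩
    · rw [mul_assoc, mul_comm n₂]
      exact hf.1
    · exact fun h hh ↦ hf.2 h (hMH hh)
  have hf_pow := h₂ _ (invariantsIn_mul_self_le hI) hstable' (fun h hh x hx ↦ hx.2 h hh) s hs
    ⟨hf_mem, hf.2⟩
  have hle : invariantsIn σ H (invariantsIn σ M I) ≤ invariantsIn σ H I :=
    fun x hx ↦ ⟨hx.1.1, hx.2⟩
  exact pow_le_pow_left' hle s hf_pow

end PowerBound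

section ElementaryStep

open scoped Pointwise in
theorem prod_mem_pow_card {R A ι : Type*} [CommSemiring R] [CommSemiring A] [Algebra R A]
    {J : Submodule R A} {s : Finset ι} {f : ι → A} (hf : ∀ i ∈ s, f i ∈ J) :
    ∏ i ∈ s, f i ∈ J ^ s.card := by
  refine Submodule.pow_subset_pow J ?_
  rw [← Finset.prod_const]
  exact Set.finsetProd_mem_finsetProd s _ f hf

theorem prod_mem_of_mul_self_le {R A ι : Type*} [CommSemiring R] [CommSemiring A] [Algebra R A]
    {I : Submodule R A} (hI : I * I ≤ I) {s : Finset ι} (hs : s.Nonempty) {f : ι → A}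
    (hf : ∀ i ∈ s, f i ∈ I) : ∏ i ∈ s, f i ∈ I :=
  Finset.prod_induction_nonempty f (· ∈ I) (fun _ _ hx hy ↦ hI (Submodule.mul_mem_mul hx hy)) hs hf

theorem map_prod_of_map_eq_smul {R A M ι : Type*} [CommSemiring R] [CommSemiring A] [Algebra R A]
    [AddCommMonoid M] (ψ : AddChar M R) (α : A →ₐ[R] A) {x : ι → A} {w : ι → M} {s : Finset ι}
    (h : ∀ i ∈ s, α (x i) = ψ (w i) • x i) :
    α (∏ i ∈ s, x i) = ψ (∑ i ∈ s, w i) • ∏ i ∈ s, x i := by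
  have hψ : ψ (∑ i ∈ s, w i) = ∏ i ∈ s, ψ (w i) :=
    map_prod ψ.toMonoidHom (fun i ↦ Multiplicative.ofAdd (w i)) s
  rw [map_prod, Finset.prod_congr rfl h, Finset.prod_smul, hψ]

variable {K P G : Type*} [Field K] [CommRing P] [Algebra K P] [Group G]
  {σ : G →* (P →ₐ[K] P)} {N H : Subgroup G} {I : Submodule K P} {a b : G}

theorem mem_invariantsIn_of_generators (hH : H ≤ Subgroup.closure {a, b} ⊔ N)
    (hfix : ∀ h ∈ N, ∀ x ∈ I, σ h x = x) {x : P} (hx : x ∈ I) (ha : σ a x = x) (hb : σ b x = x) :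
    x ∈ invariantsIn σ H I := by
  let stab : Subgroup G :=
    { carrier := {h | σ h x = x}
      one_mem' := by simp
      mul_mem' := fun {g h} (hg : σ g x = x) (hh : σ h x = x) ↦ by
        rw [Set.mem_ofPred_eq, map_mul, AlgHom.mul_apply, hh, hg]
      inv_mem' := fun {g} (hg : σ g x = x) ↦ by
        rw [Set.mem_ofPred_eq]
        nth_rw 1 [← hg]
        rw [← AlgHom.mul_apply, ← map_mul, inv_mul_cancel, map_one, AlgHom.one_apply] }
  have hle : Subgroup.closure {a, b} ⊔ N ≤ stab :=
    sup_le ((Subgroup.closure_le _).2 (Set.pair_subset ha hb)) fun h hh ↦ hfix h hh x hx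
  exact ⟨hx, fun h hh ↦ hle (hH hh)⟩

variable {p : ℕ} {ψ : AddChar (ZMod p) K}

theorem prod_mem_invariantsIn_pow [Fact p.Prime] (hI : I * I ≤ I)
    (hH : H ≤ Subgroup.closure {a, b} ⊔ N) (hfix : ∀ h ∈ N, ∀ x ∈ I, σ h x = x)
    {ι : Type*} {S : Finset ι} {x : ι → P} {e : ι → Fin 2 → ZMod p} (hx : ∀ i ∈ S, x i ∈ I)
    (hxa : ∀ i ∈ S, σ a (x i) = ψ (e i 0) • x i) (hxb : ∀ i ∈ S, σ b (x i) = ψ (e i 1) • x i)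
    (he : ∑ i ∈ S, e i = 0) {s : ℕ} (hs : s ≠ 0) (hS : s * p ≤ S.card) :
    ∏ i ∈ S, x i ∈ invariantsIn σ H I ^ s := by
  classical
  obtain ⟨k, rfl⟩ := Nat.exists_eq_succ_of_ne_zero hs
  obtain ⟨π, hπ_card, hπ⟩ := exists_finpartition_sum_eq_zero e k he hS
  have hπ_inv : ∀ T ∈ π.parts, ∏ i ∈ T, x i ∈ invariantsIn σ H I := by
    intro T hT
    have hTS : T ⊆ S := π.le hT
    have hsum (j : Fin 2) : ∑ i ∈ T, e i j = 0 := by simpa using congrFun (hπ T hT) j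
    refine mem_invariantsIn_of_generators hH hfix ?_ ?_ ?_
    · exact prod_mem_of_mul_self_le hI (π.nonempty_of_mem_parts hT) fun i hi ↦ hx i (hTS hi)
    · rw [map_prod_of_map_eq_smul ψ (σ a) fun i hi ↦ hxa i (hTS hi), hsum, AddChar.map_zero_eq_one,
        one_smul]
    · rw [map_prod_of_map_eq_smul ψ (σ b) fun i hi ↦ hxb i (hTS hi), hsum, AddChar.map_zero_eq_one,
        one_smul]
  have hprod : ∏ i ∈ S, x i = ∏ T ∈ π.parts, ∏ i ∈ T, x i := by
    conv_lhs => rw [← π.biUnion_parts]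
    exact Finset.prod_biUnion π.disjoint
  rw [hprod, Nat.succ_eq_add_one, ← hπ_card]
  exact prod_mem_pow_card hπ_inv

/-- The restriction of the action of `H` to a stable subspace. -/
def restrictAction (σ : G →* (P →ₐ[K] P)) (hI : ∀ h ∈ H, ∀ x ∈ I, σ h x ∈ I) :
    H →* Module.End K I where
  toFun h := (σ h).toLinearMap.restrict (hI h h.2)
  map_one' := by ext; simp
  map_mul' g h := by ext x; exact DFunLike.congr_fun (map_mul σ g.1 h.1) x.1

theorem restrictAction_eq_one {hI : ∀ h ∈ H, ∀ x ∈ I, σ h x ∈ I}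
    (hfix : ∀ h ∈ N, ∀ x ∈ I, σ h x = x) {h : H} (hh : (h : G) ∈ N) :
    restrictAction σ hI h = 1 :=
  LinearMap.ext fun x ↦ Subtype.ext (hfix h hh x x.2)

/-- The joint eigenvectors in `I` of `σ a` and `σ b` with eigenvalues in the image of `ψ`. -/
def weightVectors (σ : G →* (P →ₐ[K] P)) (ψ : AddChar (ZMod p) K) (a b : G) (I : Submodule K P) :
    Set P :=
  {x | x ∈ I ∧ ∃ e : Fin 2 → ZMod p, σ a x = ψ (e 0) • x ∧ σ b x = ψ (e 1) • x}

open scoped commutatorElement in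
theorem span_weightVectors_eq [NeZero p] (hψ : ψ.IsPrimitive) (hp : (p : K) ≠ 0)
    (hI : ∀ h ∈ H, ∀ x ∈ I, σ h x ∈ I) (hfix : ∀ h ∈ N, ∀ x ∈ I, σ h x = x) (ha : a ∈ H)
    (hb : b ∈ H) (hap : a ^ p ∈ N) (hbp : b ^ p ∈ N) (hab : ⁅a, b⁆ ∈ N) :
    Submodule.span K (weightVectors σ ψ a b I) = I := by
  refine le_antisymm (Submodule.span_le.2 fun x hx ↦ hx.1) fun y hy ↦ ?_
  let τ := restrictAction σ hI
  have hcomm : Commute (τ ⟨a, ha⟩) (τ ⟨b, hb⟩) := by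
    have hτ : τ ⁅(⟨a, ha⟩ : H), ⟨b, hb⟩⁆ = 1 := restrictAction_eq_one hfix hab
    calc τ ⟨a, ha⟩ * τ ⟨b, hb⟩ = τ ⁅(⟨a, ha⟩ : H), ⟨b, hb⟩⁆ * (τ ⟨b, hb⟩ * τ ⟨a, ha⟩) := by
          simp only [← map_mul, commutatorElement_def]
          congr 1
          group
      _ = τ ⟨b, hb⟩ * τ ⟨a, ha⟩ := by rw [hτ, one_mul]
  have htop := span_eigenvectors_eq_top hψ hp (A := τ ⟨a, ha⟩) (B := τ ⟨b, hb⟩)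
    (by rw [← map_pow]; exact restrictAction_eq_one hfix hap)
    (by rw [← map_pow]; exact restrictAction_eq_one hfix hbp) hcomm
  have hy_map := Submodule.mem_map_of_mem (f := I.subtype)
    (htop.ge (Submodule.mem_top (x := ⟨y, hy⟩)))
  rw [Submodule.map_span] at hy_map
  refine Submodule.span_mono ?_ hy_map
  rintro _ ⟨x, ⟨e, hxa, hxb⟩, rfl⟩
  exact ⟨x.2, e, congrArg Subtype.val hxa, congrArg Subtype.val hxb⟩

open scoped commutatorElement Pointwise in
theorem isPowerBound_of_primitive_char [Fact p.Prime] (hψ : ψ.IsPrimitive) (hp : (p : K) ≠ 0)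
    (ha : a ∈ H) (hb : b ∈ H) (hH : H ≤ Subgroup.closure {a, b} ⊔ N) (hap : a ^ p ∈ N)
    (hbp : b ^ p ∈ N) (hab : ⁅a, b⁆ ∈ N) : IsPowerBound σ N H p := by
  intro I hI hstable hfix s hs f hf
  let A : Module.End K P := (σ a).toLinearMap
  let B : Module.End K P := (σ b).toLinearMap
  let R : Module.End K P := charProj ψ A 0 * charProj ψ B 0
  have hspan := span_weightVectors_eq hψ hp hstable hfix ha hb hap hbp hab
  have hf_span := hf.1
  rw [← hspan, Submodule.span_pow] at hf_span
  have hRf : R f = ((p : K) * p) • f := by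
    have hA : A f = ψ 0 • f := by
      rw [AddChar.map_zero_eq_one, one_smul]
      exact hf.2 a ha
    have hB : B f = ψ 0 • f := by
      rw [AddChar.map_zero_eq_one, one_smul]
      exact hf.2 b hb
    simpa [R] using charProj_zero_mul_apply hψ (e := 0) hA hB
  have hR : (weightVectors σ ψ a b I ^ (s * p) : Set P) ⊆ (invariantsIn σ H I ^ s).comap R := by
    intro y hy
    obtain ⟨x, hx, rfl⟩ := Set.mem_pow_iff_prod.1 hy
    choose hxI e hxa hxb using hx
    have hA := map_prod_of_map_eq_smul ψ (σ a) (s := Finset.univ) fun i _ ↦ hxa i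
    have hB := map_prod_of_map_eq_smul ψ (σ b) (s := Finset.univ) fun i _ ↦ hxb i
    rw [← Finset.sum_apply] at hA hB
    rw [SetLike.mem_coe, Submodule.mem_comap, charProj_zero_mul_apply hψ hA hB]
    split_ifs with he
    · exact Submodule.smul_mem _ _ <| prod_mem_invariantsIn_pow hI hH hfix (fun i _ ↦ hxI i)
        (fun i _ ↦ hxa i) (fun i _ ↦ hxb i) he hs (by simp)
    · exact Submodule.zero_mem _
  rw [← Submodule.smul_mem_iff _ (mul_ne_zero hp hp), ← hRf]
  exact Submodule.span_le.2 hR hf_span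

end ElementaryStep

section BaseChange

open TensorProduct

variable {F P G : Type*} [Field F] [CommRing P] [Algebra F P] [Group G] (K : Type*) [Field K]
  [Algebra F K]

theorem baseChange_pow_submodule (I : Submodule F P) (n : ℕ) :
    (I ^ n).baseChange K = I.baseChange K ^ n := by
  rw [← I.span_eq, Submodule.span_pow, Submodule.baseChange_span, Submodule.baseChange_span,
    Submodule.span_pow]
  congr 1
  exact Set.image_pow (Algebra.TensorProduct.includeRight : P →ₐ[F] K ⊗[F] P) _ n

variable {K}

/-- The `F`-linear map `K ⊗ P → P` contracting the first factor with a linear form `l` on `K`. -/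
noncomputable def scalarContraction (l : K →ₗ[F] F) : K ⊗[F] P →ₗ[F] P :=
  (TensorProduct.lid F P).toLinearMap ∘ₗ l.rTensor P

@[simp]
theorem scalarContraction_tmul (l : K →ₗ[F] F) (c : K) (y : P) :
    scalarContraction l (c ⊗ₜ[F] y) = l c • y := by
  simp [scalarContraction]

theorem mem_baseChange_iff_scalarContraction {J : Submodule F P} {z : K ⊗[F] P} :
    z ∈ J.baseChange K ↔ ∀ l : K →ₗ[F] F, scalarContraction l z ∈ J := by
  classical
  refine ⟨fun hz l ↦ ?_, fun h ↦ ?_⟩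
  · obtain ⟨y, hy⟩ := Submodule.toBaseChange_surjective K J ⟨z, hz⟩
    obtain rfl : (Submodule.toBaseChange K J y : K ⊗[F] P) = z := congrArg Subtype.val hy
    clear hy hz
    induction y with
    | zero => simp
    | tmul c y => simpa using J.smul_mem (l c) y.2
    | add x y hx hy => simpa only [map_add, Submodule.coe_add] using J.add_mem hx hy
  · let B := Module.Basis.ofVectorSpace F K
    rw [← (TensorProduct.equivFinsuppOfBasisLeft (N := P) B).symm_apply_apply z,
      TensorProduct.equivFinsuppOfBasisLeft_symm_apply]
    refine Submodule.sum_mem _ fun i _ ↦ Submodule.tmul_mem_baseChange_of_mem _ ?_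
    rw [TensorProduct.equivFinsuppOfBasisLeft_apply]
    exact h (B.coord i)

variable (K) in
/-- The action of `G` on `K ⊗ P` by extension of scalars. -/
noncomputable def baseChangeAction (σ : G →* (P →ₐ[F] P)) : G →* (K ⊗[F] P →ₐ[K] K ⊗[F] P) where
  toFun g := Algebra.TensorProduct.map (AlgHom.id K K) (σ g)
  map_one' := by ext; simp
  map_mul' g h := by ext; simp

variable {σ : G →* (P →ₐ[F] P)} {N H : Subgroup G} {I : Submodule F P}

theorem scalarContraction_baseChangeAction (l : K →ₗ[F] F) (g : G) (z : K ⊗[F] P) :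
    scalarContraction l (baseChangeAction K σ g z) = σ g (scalarContraction l z) := by
  induction z with
  | zero => simp
  | tmul c y => simp [baseChangeAction]
  | add x y hx hy => simp only [map_add, hx, hy]

variable (K)

theorem invariantsIn_baseChange :
    (invariantsIn σ H I).baseChange K = invariantsIn (baseChangeAction K σ) H (I.baseChange K) := by
  refine le_antisymm ?_ fun z hz ↦ ?_
  · rw [Submodule.baseChange_eq_span, Submodule.span_le]
    rintro _ ⟨x, hx, rfl⟩
    refine ⟨Submodule.tmul_mem_baseChange_of_mem _ hx.1, fun h hh ↦ ?_⟩
    simp [baseChangeAction, hx.2 h hh]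
  · rw [mem_baseChange_iff_scalarContraction]
    refine fun l ↦ ⟨mem_baseChange_iff_scalarContraction.1 hz.1 l, fun h hh ↦ ?_⟩
    rw [← scalarContraction_baseChangeAction, hz.2 h hh]

theorem IsPowerBound.of_baseChange {n : ℕ} (h : IsPowerBound (baseChangeAction K σ) N H n) :
    IsPowerBound σ N H n := by
  intro I hI hstable hfix s hs
  have hI_K : I.baseChange K * I.baseChange K ≤ I.baseChange K := by
    rw [← pow_two, ← baseChange_pow_submodule, pow_two]
    exact Submodule.baseChange_mono K hI
  have hstable_K : ∀ h ∈ H, ∀ z ∈ I.baseChange K, baseChangeAction K σ h z ∈ I.baseChange K := by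
    intro h hh z hz
    rw [mem_baseChange_iff_scalarContraction] at hz ⊢
    intro l
    rw [scalarContraction_baseChangeAction]
    exact hstable h hh _ (hz l)
  have hfix_K : ∀ h ∈ N, ∀ z ∈ I.baseChange K, baseChangeAction K σ h z = z := by
    have hle : I ≤ invariantsIn σ N I := fun x hx ↦ ⟨hx, fun h hh ↦ hfix h hh x hx⟩
    intro h hh z hz
    have hz' := Submodule.baseChange_mono K hle hz
    rw [invariantsIn_baseChange] at hz'
    exact hz'.2 h hh
  rw [← Submodule.baseChange_le_iff (A := K), invariantsIn_baseChange, baseChange_pow_submodule,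
    baseChange_pow_submodule, invariantsIn_baseChange]
  exact h _ hI_K hstable_K hfix_K s hs

open scoped commutatorElement in
theorem isPowerBound_of_prime {p : ℕ} (hp : p.Prime) (hpF : (p : F) ≠ 0) {a b : G} (ha : a ∈ H)
    (hb : b ∈ H) (hH : H ≤ Subgroup.closure {a, b} ⊔ N) (hap : a ^ p ∈ N) (hbp : b ^ p ∈ N)
    (hab : ⁅a, b⁆ ∈ N) : IsPowerBound σ N H p := by
  have : Fact p.Prime := ⟨hp⟩
  have : NeZero (p : F) := ⟨hpF⟩
  let K := CyclotomicField p F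
  have hζ : IsPrimitiveRoot (IsCyclotomicExtension.zeta p F K) p :=
    IsCyclotomicExtension.zeta_spec p F K
  have hpK : (p : K) ≠ 0 := by
    rwa [← map_natCast (algebraMap F K), Ne, FaithfulSMul.algebraMap_eq_zero_iff]
  exact IsPowerBound.of_baseChange K <| isPowerBound_of_primitive_char
    (AddChar.zmodChar_primitive_of_primitive_root p hζ) hpK ha hb hH hap hbp hab

end BaseChange

section CyclicAutomorphism

theorem coprime_sub_one_of_forall_le {p c : ℕ} (hp : 1 < p) (h : ∀ q, q.Prime → q ∣ c → p ≤ q) :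
    c.Coprime (p - 1) := by
  refine Nat.coprime_of_dvd fun q hq hqc hqp ↦ ?_
  have := h q hq hqc
  have := Nat.le_of_dvd (by lia) hqp
  lia

theorem primes_le_of_mul_minFac {n c c' : ℕ} (hc : c ≠ 1) (hc' : c = c.minFac * c')
    (h : ∀ p q, p.Prime → q.Prime → p ∣ n → q ∣ c → p ≤ q) (p q : ℕ) (hp : p.Prime)
    (hq : q.Prime) (hpn : p ∣ n * c.minFac) (hqc' : q ∣ c') : p ≤ q := by
  have hqc : q ∣ c := hc' ▸ hqc'.mul_left _
  obtain hpn | hpc := hp.dvd_mul.1 hpn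
  · exact h p q hp hq hpn hqc
  · rw [(Nat.prime_dvd_prime_iff_eq hp (Nat.minFac_prime hc)).1 hpc]
    exact Nat.minFac_le_of_dvd hq.two_le hqc

theorem zmod_pow_eq_one_of_totient_dvd {r n c j : ℕ} {v : ZMod r} (hnc : n * c ≠ 0)
    (hv : v ^ (n * c) = 1) (hr : r.totient ∣ n * j) (hcj : c.Coprime j) : v ^ n = 1 := by
  obtain ⟨v, rfl⟩ := IsUnit.of_pow_eq_one hv hnc
  have hvc : (v ^ n) ^ c = 1 := by
    rw [← pow_mul]
    exact Units.ext hv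
  have hvj : (v ^ n) ^ j = 1 := by
    obtain ⟨i, hi⟩ := hr
    rw [← pow_mul, hi, pow_mul, ZMod.pow_totient, one_pow]
  have hvn : v ^ n = 1 := by simpa [hcj.gcd_eq_one] using pow_gcd_eq_one.2 ⟨hvc, hvj⟩
  exact congrArg Units.val hvn

theorem pow_apply_div_mem_range_powMonoidHom {A : Type*} [CommGroup A] [IsCyclic A] {f : MulAut A}
    {r n c j : ℕ} (hrA : r ∣ Nat.card A) (hnc : n * c ≠ 0) (hf : f ^ (n * c) = 1)
    (hr : r.totient ∣ n * j) (hcj : c.Coprime j) (a : A) :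
    (f ^ n) a / a ∈ (powMonoidHom r : A →* A).range := by
  obtain ⟨v, hv⟩ := MonoidHom.map_cyclic f.toMonoidHom
  have hpow (i : ℕ) (x : A) : (f ^ i) x = x ^ (v ^ i) := by
    induction i generalizing x with
    | zero => simp
    | succ i ih =>
      rw [pow_succ, MulAut.mul_apply, ih, pow_succ', zpow_mul]
      exact congrArg (· ^ v ^ i) (hv x)
  obtain ⟨u, hu⟩ := IsCyclic.exists_generator (α := A)
  have hv_pow : ((v : ℤ) : ZMod r) ^ (n * c) = 1 := by
    have huv : u ^ (v ^ (n * c)) = u ^ (1 : ℤ) := by rw [← hpow, hf, zpow_one, MulAut.one_apply]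
    rw [zpow_eq_zpow_iff_modEq, orderOf_eq_card_of_forall_mem_zpowers hu] at huv
    exact_mod_cast (ZMod.intCast_eq_intCast_iff _ _ r).2
      (huv.of_dvd (Int.natCast_dvd_natCast.2 hrA))
  have hv_n := zmod_pow_eq_one_of_totient_dvd hnc hv_pow hr hcj
  obtain ⟨i, hi⟩ : (r : ℤ) ∣ v ^ n - 1 := by
    rw [← ZMod.intCast_zmod_eq_zero_iff_dvd]
    simp [hv_n]
  refine ⟨a ^ i, ?_⟩
  calc (a ^ i) ^ r = a ^ (v ^ n - 1) := by rw [hi, ← zpow_natCast, ← zpow_mul, mul_comm]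
    _ = (f ^ n) a / a := by rw [hpow, zpow_sub, zpow_one, div_eq_mul_inv]

end CyclicAutomorphism

section PowSubgroup

open SemidirectProduct

variable {A B : Type*} [CommGroup A] [CommGroup B] {φ : B →* MulAut A} {n m c : ℕ}

/-- The subgroup `Aⁿ ⋊ Bⁿ` of `A ⋊ B`. -/
def powSubgroup (φ : B →* MulAut A) (n : ℕ) : Subgroup (A ⋊[φ] B) where
  carrier := {g | g.left ∈ (powMonoidHom n : A →* A).range ∧
    g.right ∈ (powMonoidHom n : B →* B).range}
  one_mem' := ⟨one_mem _, one_mem _⟩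
  mul_mem' := by
    rintro g h ⟨hg, hg'⟩ ⟨⟨x, hx⟩, hh'⟩
    exact ⟨mul_mem hg ⟨φ g.right x, by simp [← hx]⟩, mul_mem hg' hh'⟩
  inv_mem' := by
    rintro g ⟨⟨x, hx⟩, hg'⟩
    exact ⟨⟨φ g.right⁻¹ x⁻¹, by simp [← hx]⟩, inv_mem hg'⟩

theorem inl_pow_mem_powSubgroup (x : A) :
    (inl (x ^ n) : A ⋊[φ] B) ∈ powSubgroup φ n :=
  ⟨⟨x, rfl⟩, one_mem _⟩

theorem inr_pow_mem_powSubgroup (y : B) :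
    (inr (y ^ n) : A ⋊[φ] B) ∈ powSubgroup φ n :=
  ⟨one_mem _, ⟨y, rfl⟩⟩

theorem powSubgroup_mul_le (q : ℕ) : powSubgroup φ (n * q) ≤ powSubgroup φ n := by
  rintro g ⟨⟨x, hx⟩, ⟨y, hy⟩⟩
  exact ⟨⟨x ^ q, by simpa [← pow_mul, mul_comm n] using hx⟩,
    ⟨y ^ q, by simpa [← pow_mul, mul_comm n] using hy⟩⟩

theorem powSubgroup_one : powSubgroup φ 1 = ⊤ :=
  top_unique fun g _ ↦ ⟨⟨g.left, by simp⟩, ⟨g.right, by simp⟩⟩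

theorem powSubgroup_eq_bot (hA : ∀ a : A, a ^ m = 1) (hB : ∀ b : B, b ^ m = 1) :
    powSubgroup φ m = ⊥ := by
  refine bot_unique ?_
  rintro g ⟨⟨x, hx⟩, ⟨y, hy⟩⟩
  exact SemidirectProduct.ext (hx.symm.trans (hA x)) (hy.symm.trans (hB y))

theorem powSubgroup_normal
    (h : ∀ b a, (φ b ^ n) a / a ∈ (powMonoidHom n : A →* A).range) : (powSubgroup φ n).Normal := by
  refine ⟨fun g ⟨⟨x, hx⟩, ⟨y, hy⟩⟩ k ↦ ⟨?_, ⟨y, by simp [← hy]⟩⟩⟩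
  have hleft : (k * g * k⁻¹).left = φ k.right x ^ n * ((φ y ^ n) k.left / k.left)⁻¹ := by
    have hright : k.right * g.right * k.right⁻¹ = y ^ n := by simp [← hy]
    simp only [powMonoidHom_apply] at hx
    simp only [mul_left, mul_right, inv_left,
      ← MulAut.mul_apply, ← map_mul, hright]
    rw [← hx]
    simp [div_eq_mul_inv, mul_comm, mul_left_comm, mul_assoc]
  rw [hleft]
  exact mul_mem ⟨_, rfl⟩ (inv_mem (h y k.left))

theorem powSubgroup_le_closure {u : A} {w : B} (hu : ∀ a, a ∈ Subgroup.zpowers u)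
    (hw : ∀ b, b ∈ Subgroup.zpowers w) : powSubgroup φ n ≤
      Subgroup.closure {inl (u ^ n), inr (w ^ n)} := by
  rintro g ⟨⟨x, hx⟩, ⟨y, hy⟩⟩
  obtain ⟨i, rfl⟩ := hu x
  obtain ⟨j, rfl⟩ := hw y
  have hg : g = inl (u ^ n) ^ i * inr (w ^ n) ^ j := by
    rw [← inl_left_mul_inr_right g, ← hx, ← hy]
    simp only [powMonoidHom_apply, ← map_zpow, ← zpow_natCast, ← zpow_mul, mul_comm]
  rw [hg]
  exact mul_mem (zpow_mem (Subgroup.subset_closure (by simp)) i)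
    (zpow_mem (Subgroup.subset_closure (by simp)) j)

open scoped commutatorElement in
theorem commutatorElement_inl_inr (a : A) (b : B) :
    ⁅(inl a : A ⋊[φ] B), (inr b : A ⋊[φ] B)⁆ =
      inl (φ b a / a)⁻¹ := by
  ext <;> simp [commutatorElement_def, div_eq_mul_inv]

theorem pow_apply_div_mem_range_of_primes_le [IsCyclic A] (hA : Nat.card A = n * c)
    (hB : ∀ b : B, b ^ (n * c) = 1) (hnc : n * c ≠ 0)
    (hmin : ∀ p q, p.Prime → q.Prime → p ∣ n → q ∣ c → p ≤ q) (b : B) (a : A) :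
    (φ b ^ n) a / a ∈ (powMonoidHom n : A →* A).range := by
  refine pow_apply_div_mem_range_powMonoidHom (j := ∏ p ∈ n.primeFactors, (p - 1))
    (hA ▸ dvd_mul_right n c) hnc (by rw [← map_pow, hB, map_one])
    ⟨_, (Nat.totient_mul_prod_primeFactors n).symm⟩ (Nat.Coprime.prod_right fun p hp ↦ ?_) a
  have hp_prime := Nat.prime_of_mem_primeFactors hp
  exact coprime_sub_one_of_forall_le hp_prime.one_lt fun q hq hqc ↦
    hmin p q hp_prime hq (Nat.dvd_of_mem_primeFactors hp) hqc

theorem pow_apply_div_mem_range_minFac [IsCyclic A] (hA : Nat.card A = n * c)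
    (hB : ∀ b : B, b ^ (n * c) = 1) (hnc : n * c ≠ 0) (hc : c ≠ 1) (b : B) (a : A) :
    (φ b ^ n) a / a ∈ (powMonoidHom c.minFac : A →* A).range := by
  have hq : c.minFac.Prime := Nat.minFac_prime hc
  refine pow_apply_div_mem_range_powMonoidHom (j := c.minFac - 1)
    (hA ▸ dvd_mul_of_dvd_right c.minFac_dvd n) hnc (by rw [← map_pow, hB, map_one])
    (by rw [Nat.totient_prime hq]; exact dvd_mul_left _ n) ?_ a
  exact coprime_sub_one_of_forall_le hq.one_lt fun q hq' hqc ↦ Nat.minFac_le_of_dvd hq'.two_le hqc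

variable {F P : Type*} [Field F] [CommRing P] [Algebra F P]
  {σ : (A ⋊[φ] B) →* (P →ₐ[F] P)}

theorem isPowerBound_powSubgroup_minFac [IsCyclic A] [IsCyclic B] (hA : Nat.card A = n * c)
    (hB : ∀ b : B, b ^ (n * c) = 1) (hnc : n * c ≠ 0) (hc : c ≠ 1) (hF : ((n * c : ℕ) : F) ≠ 0) :
    IsPowerBound σ (powSubgroup φ (n * c.minFac)) (powSubgroup φ n) c.minFac := by
  obtain ⟨u, hu⟩ := IsCyclic.exists_generator (α := A)
  obtain ⟨w, hw⟩ := IsCyclic.exists_generator (α := B)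
  have hqF : ((c.minFac : ℕ) : F) ≠ 0 := by
    intro hq
    obtain ⟨i, hi⟩ := c.minFac_dvd.mul_left n
    exact hF (by rw [hi, Nat.cast_mul, hq, zero_mul])
  refine isPowerBound_of_prime (Nat.minFac_prime hc) hqF (inl_pow_mem_powSubgroup u)
    (inr_pow_mem_powSubgroup w) ((powSubgroup_le_closure hu hw).trans le_sup_left) ?_ ?_ ?_
  · rw [← map_pow, ← pow_mul]
    exact inl_pow_mem_powSubgroup u
  · rw [← map_pow, ← pow_mul]
    exact inr_pow_mem_powSubgroup w
  · obtain ⟨x, hx⟩ := pow_apply_div_mem_range_minFac (φ := φ) hA hB hnc hc w u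
    have hpow : (φ (w ^ n) (u ^ n) / u ^ n)⁻¹ = x⁻¹ ^ (n * c.minFac) := by
      rw [map_pow, map_pow, ← div_pow, ← hx, powMonoidHom_apply, inv_pow, mul_comm n, pow_mul]
    rw [commutatorElement_inl_inr, hpow]
    exact inl_pow_mem_powSubgroup _

/- Refining by the smallest prime factor first keeps every prime factor of `n` below those of `c`,
which makes `powSubgroup φ n` normal at each stage. -/
theorem isPowerBound_powSubgroup [IsCyclic A] [IsCyclic B] (hA : Nat.card A = m)
    (hB : ∀ b : B, b ^ m = 1) (hm : m ≠ 0) (hF : (m : F) ≠ 0) (c n : ℕ) (hnc : n * c = m)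
    (hmin : ∀ p q, p.Prime → q.Prime → p ∣ n → q ∣ c → p ≤ q) :
    IsPowerBound σ (powSubgroup φ m) (powSubgroup φ n) c := by
  induction c using Nat.strong_induction_on generalizing n with
  | _ c ih =>
    obtain rfl | hc := eq_or_ne c 1
    · rw [← hnc, mul_one]
      exact isPowerBound_self_one σ _
    have hq : c.minFac.Prime := Nat.minFac_prime hc
    obtain ⟨c', hc'⟩ := c.minFac_dvd
    have hnqc : n * c.minFac * c' = m := by rw [mul_assoc, ← hc', hnc]
    have hc'_pos : 0 < c' := by
      refine Nat.pos_of_ne_zero fun h ↦ hm ?_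
      rw [← hnqc, h, mul_zero]
    have hlt : c' < c := by
      rw [hc']
      exact lt_mul_of_one_lt_left hc'_pos hq.one_lt
    have hmin' := primes_le_of_mul_minFac hc hc' hmin
    have hnormal : (powSubgroup φ (n * c.minFac)).Normal := powSubgroup_normal <|
      pow_apply_div_mem_range_of_primes_le (hnqc ▸ hA) (hnqc ▸ hB) (hnqc ▸ hm) hmin'
    have hstep : IsPowerBound σ (powSubgroup φ (n * c.minFac)) (powSubgroup φ n) c.minFac :=
      isPowerBound_powSubgroup_minFac (hnc ▸ hA) (hnc ▸ hB) (hnc ▸ hm) hc (hnc ▸ hF)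
    have hchain := (ih c' hlt _ hnqc hmin').trans hstep (powSubgroup_mul_le _) hq.ne_zero
    rwa [mul_comm, ← hc'] at hchain

end PowSubgroup

section PolynomialAction

variable {F G : Type*} [Field F] [Group G] {d : ℕ}
  (ρ : G →* Matrix.GeneralLinearGroup (Fin d) F) {f : MvPolynomial (Fin d) F}

/-- The action of `G` on `F[V]` by algebra automorphisms, the inverse making the substitution
`polyAct ρ` covariant in `g`. -/
noncomputable def polyAction : G →* (MvPolynomial (Fin d) F →ₐ[F] MvPolynomial (Fin d) F) where
  toFun g := aeval fun i ↦ ∑ j, (ρ g⁻¹).val i j • X j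
  map_one' := algHom_ext fun i ↦ by simp [Matrix.one_apply]
  map_mul' g h := algHom_ext fun i ↦ by
    simp only [AlgHom.mul_apply, aeval_X, map_sum, map_smul, mul_inv_rev, map_mul, Units.val_mul,
      Matrix.mul_apply, Finset.smul_sum, smul_smul, Finset.sum_smul]
    exact Finset.sum_comm

theorem polyAction_apply (g : G) (f : MvPolynomial (Fin d) F) :
    polyAction ρ g f = polyAct ρ g⁻¹ f := rfl

theorem isPolyInvariant_iff : IsPolyInvariant ρ f ↔ ∀ g, polyAction ρ g f = f :=
  ⟨fun h g ↦ h g⁻¹, fun h g ↦ by simpa [polyAction_apply] using h g⁻¹⟩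

theorem isHomogeneous_polyAction {n : ℕ} (hf : f.IsHomogeneous n) (g : G) :
    (polyAction ρ g f).IsHomogeneous n := by
  have hlin (i : Fin d) :
      (∑ j, (ρ g⁻¹).val i j • X j : MvPolynomial (Fin d) F).IsHomogeneous 1 :=
    IsHomogeneous.sum _ _ _ fun j _ ↦ Submodule.smul_mem (homogeneousSubmodule _ F 1) _
      (isHomogeneous_X F j)
  simpa only [one_mul, polyAction_apply, polyAct] using hf.aeval _ hlin

theorem homogeneousComponent_polyAction (n : ℕ) (g : G) (f : MvPolynomial (Fin d) F) :
    homogeneousComponent n (polyAction ρ g f) = polyAction ρ g (homogeneousComponent n f) := by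
  conv_lhs => rw [← sum_homogeneousComponent f, map_sum, map_sum]
  have hcomp (i : ℕ) : homogeneousComponent n (polyAction ρ g (homogeneousComponent i f)) =
      if n = i then polyAction ρ g (homogeneousComponent n f) else 0 := by
    rw [homogeneousComponent_of_mem
      (isHomogeneous_polyAction ρ (homogeneousComponent_isHomogeneous i f) g)]
    split_ifs with h <;> simp_all
  simp_rw [hcomp, Finset.sum_ite_eq]
  split_ifs with h
  · rfl
  · rw [homogeneousComponent_eq_zero _ _ (by simpa using h), map_zero]

variable {ρ} in
theorem IsPolyInvariant.homogeneousComponent (hf : IsPolyInvariant ρ f) (n : ℕ) :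
    IsPolyInvariant ρ (homogeneousComponent n f) :=
  (isPolyInvariant_iff ρ).2 fun g ↦ by
    rw [← homogeneousComponent_polyAction, (isPolyInvariant_iff ρ).1 hf g]

theorem constantCoeff_polyAction (g : G) (f : MvPolynomial (Fin d) F) :
    constantCoeff (polyAction ρ g f) = constantCoeff f := by
  have h := homogeneousComponent_polyAction ρ 0 g f
  simpa only [homogeneousComponent_zero, algHom_C, algebraMap_eq, C_inj,
    ← constantCoeff_eq] using h

theorem mem_idealOfVars_iff {ι R : Type*} [CommRing R] {f : MvPolynomial ι R} :
    f ∈ idealOfVars ι R ↔ constantCoeff f = 0 := by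
  rw [← pow_one (idealOfVars ι R), mem_pow_idealOfVars_iff']
  simp [constantCoeff_eq, Finsupp.degree_eq_zero_iff]

theorem mem_pow_idealOfVars_of_isHomogeneous {ι R : Type*} [CommRing R] {f : MvPolynomial ι R}
    {n t : ℕ} (hf : f.IsHomogeneous t) (hnt : n ≤ t) : f ∈ idealOfVars ι R ^ n := by
  rw [mem_pow_idealOfVars_iff]
  intro x hx
  rw [Finsupp.degree_eq_weight_one, ← Pi.one_def]
  exact hnt.trans_eq (hf (mem_support_iff.1 hx)).symm

open scoped Pointwise in
theorem pow_le_span_list_prod {R P : Type*} [CommSemiring R] [CommSemiring P] [Algebra R P]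
    (J : Submodule R P) (s : ℕ) :
    J ^ s ≤ Submodule.span R {y | ∃ l : List P, s ≤ l.length ∧ (∀ x ∈ l, x ∈ J) ∧ l.prod = y} := by
  rw [Submodule.pow_eq_span_pow_set, Submodule.span_le]
  intro y hy
  obtain ⟨x, hx, rfl⟩ := Set.mem_pow_iff_prod.1 hy
  exact Submodule.subset_span
    ⟨List.ofFn x, by simp, by simpa [List.mem_ofFn'] using hx, List.prod_ofFn⟩

theorem betaKBoundLe_of_isPowerBound {n : ℕ} (h : IsPowerBound (polyAction ρ) ⊥ ⊤ n) (hn : n ≠ 0)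
    (k : ℕ) : BetaKBoundLe ρ k (k * n + n - 1) := by
  let I : Submodule F (MvPolynomial (Fin d) F) := (idealOfVars (Fin d) F).restrictScalars F
  have hI_iff (y : MvPolynomial (Fin d) F) : y ∈ I ↔ constantCoeff y = 0 := mem_idealOfVars_iff
  have hI_stable : ∀ g ∈ (⊤ : Subgroup G), ∀ y ∈ I, polyAction ρ g y ∈ I := by
    intro g _ y hy
    rwa [hI_iff, constantCoeff_polyAction, ← hI_iff]
  intro f hf hf0
  rw [← sum_homogeneousComponent f]
  refine Submodule.sum_mem _ fun t _ ↦ ?_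
  have hct : (homogeneousComponent t f).IsHomogeneous t := homogeneousComponent_isHomogeneous t f
  have hc := hf.homogeneousComponent t
  by_cases ht : t ≤ k * n + n - 1
  · have hc0 : constantCoeff (homogeneousComponent t f) = 0 := by
      rw [constantCoeff_eq] at hf0 ⊢
      rw [coeff_homogeneousComponent, hf0, ite_self]
    exact Submodule.subset_span (Or.inl ⟨hc, hc0, hct.totalDegree_le.trans ht⟩)
  · have hcI : homogeneousComponent t f ∈ I ^ ((k + 1) * n) := by
      rw [← Submodule.restrictScalars_pow (by positivity)]
      exact mem_pow_idealOfVars_of_isHomogeneous hct (by rw [add_mul, one_mul]; lia)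
    have hc_pow := h I Ideal.mul_le_left hI_stable (by simp) (k + 1) k.succ_ne_zero
      ⟨hcI, fun g _ ↦ (isPolyInvariant_iff ρ).1 hc g⟩
    refine Submodule.span_mono ?_ (pow_le_span_list_prod _ _ hc_pow)
    rintro _ ⟨l, hl, hlmem, rfl⟩
    refine Or.inr ⟨l, hl, fun y hy ↦ ⟨?_, (hI_iff y).1 (hlmem y hy).1⟩, rfl⟩
    exact (isPolyInvariant_iff ρ).2 fun g ↦ (hlmem y hy).2 g trivial

end PolynomialAction

theorem betaK_semidirect_le_general {A B F : Type*} [CommGroup A] [IsCyclic A] [CommGroup B]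
    [IsCyclic B] [Field F] {m : ℕ} (hA : Nat.card A = m) (hB : Nat.card B ∣ m)
    (hF : (m : F) ≠ 0) (φ : B →* MulAut A) {d : ℕ}
    (ρ : (A ⋊[φ] B) →* Matrix.GeneralLinearGroup (Fin d) F) (k : ℕ) :
    BetaKBoundLe ρ k (k * m + m - 1) := by
  have hm : m ≠ 0 := fun h ↦ hF (by rw [h, Nat.cast_zero])
  have hA_pow (a : A) : a ^ m = 1 := hA ▸ pow_card_eq_one'
  have hB_pow (b : B) : b ^ m = 1 := by
    obtain ⟨i, rfl⟩ := hB
    rw [pow_mul, pow_card_eq_one', one_pow]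
  have h : IsPowerBound (polyAction ρ) (powSubgroup φ m) (powSubgroup φ 1) m :=
    isPowerBound_powSubgroup hA hB_pow hm hF m 1 (one_mul m)
      fun p _ hp _ hp1 _ ↦ absurd (Nat.dvd_one.1 hp1) hp.ne_one
  rw [powSubgroup_eq_bot hA_pow hB_pow, powSubgroup_one] at h
  exact betaKBoundLe_of_isPowerBound ρ h hm k

/-- For any `G`-module `V` of `G = C_m ⋉_φ C_m` over a field of characteristic
not dividing `m²`, the generalized Noether number satisfies
`β_k(C_m ⋉_φ C_m, V) ≤ km + m − 1`. -/
theorem betaK_semidirect_le (m k : ℕ) (hm : 0 < m) (hk : 0 < k)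
    (φ : Multiplicative (ZMod m) →* MulAut (Multiplicative (ZMod m)))
    (F : Type*) [Field F] (hF : ¬ (ringChar F ∣ m ^ 2)) (d : ℕ)
    (ρ : (Multiplicative (ZMod m) ⋊[φ] Multiplicative (ZMod m)) →*
      Matrix.GeneralLinearGroup (Fin d) F) :
    BetaKBoundLe ρ k (k * m + m - 1) := by
  have hcard : Nat.card (Multiplicative (ZMod m)) = m :=
    (Nat.card_congr Multiplicative.toAdd).trans (Nat.card_zmod m)
  exact betaK_semidirect_le_general hcard hcard.dvd
    (fun h ↦ hF (dvd_pow ((ringChar.spec F m).1 h) two_ne_zero)) φ ρ k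
end
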